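/- Let N ≥ 2, 1 < q ≤ 1* := N/(N-1), α > 0, a > 0, b > 0, and set E_q := (1/(N^{N-1} ω_{N-1}))^{q-1}. Define D_α := sup { ‖u‖_1 + α ‖u‖_q^q : u ∈ BV(ℝ^N), ‖u‖_{TV}^a + ‖u‖_1^b = 1 } and, for t > 0, f_α(t) := ((1+t)^{(q-1)(N/a - (N-1)/b)} + α E_q t^{(q-1)N/a}) / (1+t)^{(q-1)N/a + (N - q(N-1))/b}. Then D_α = sup_{t>0} f_α(t). -/

import Mathlib

open MeasureTheory Real Filter Topology

noncomputable section

abbrev Euc (N : ℕ) := EuclideanSpace ℝ (Fin N)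

/-- The set of values `∫ u div ψ` over admissible test vector fields. -/
def TVSet (N : ℕ) (u : Euc N → ℝ) : Set ℝ :=
  { r | ∃ ψ : Euc N → Euc N, ContDiff ℝ 1 ψ ∧ HasCompactSupport ψ ∧
      (∀ x, ‖ψ x‖ ≤ 1) ∧
      r = ∫ x, u x * (∑ i, fderiv ℝ (fun y => ψ y i) x (EuclideanSpace.single i 1)) }

/-- Total variation of `u`. -/
def tv (N : ℕ) (u : Euc N → ℝ) : ℝ := sSup (TVSet N u)

/-- `u` is a function of bounded variation on `ℝ^N`. -/
def MemBV (N : ℕ) (u : Euc N → ℝ) : Prop :=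
  Integrable u ∧ BddAbove (TVSet N u)

/-- The `L¹` norm. -/
def nrm1 (N : ℕ) (u : Euc N → ℝ) : ℝ := (eLpNorm u 1 volume).toReal

/-- The `L^q` norm, `q` a real exponent. -/
def nrmq (N : ℕ) (q : ℝ) (u : Euc N → ℝ) : ℝ :=
  (eLpNorm u (ENNReal.ofReal q) volume).toReal

/-- Surface area `ω_{N-1}` of the unit sphere in `ℝ^N`, as `N` times the
volume of the unit ball. -/
def omegaS (N : ℕ) : ℝ := N * (volume (Metric.ball (0 : Euc N) 1)).toReal

/-- The Gagliardo–Nirenberg ratio `‖u‖_q^q / (‖u‖_1^{q-(q-1)N} ‖u‖_{TV}^{(q-1)N})`. -/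
def ratioQ (N : ℕ) (q : ℝ) (u : Euc N → ℝ) : ℝ :=
  nrmq N q u ^ q / (nrm1 N u ^ (q - (q-1)*N) * tv N u ^ ((q-1)*(N:ℝ)))

/-- The best constant `E_q` on `BV(ℝ^N)`. -/
def EqSup (N : ℕ) (q : ℝ) : ℝ :=
  sSup { r | ∃ u : Euc N → ℝ, MemBV N u ∧ u ≠ 0 ∧ r = ratioQ N q u }

/-
On the constraint set put `m = ‖u‖_1` and `V = ‖u‖_{TV}`. The Gagliardo–Nirenberg inequality
`‖u‖_q^q ≤ E_q m^{q-(q-1)N} V^{(q-1)N}` bounds the functional by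
`m + α E_q m^{q-(q-1)N} V^{(q-1)N}`, and since `V^a + m^b = 1` this is `f_α(t)` for `t = V^a / m^b`.
The inequality is an equality for multiples of indicators of balls, and their radius and height can
be chosen to realise any `m, V > 0`, hence any `t > 0`.

The Gagliardo–Nirenberg inequality interpolates between `L¹` and the sharp Sobolev inequality
`N κ_N^{1/N} ‖u‖_{1*} ≤ ‖u‖_{TV}`, where `κ_N` is the volume of the unit ball. The latter is reduced
by truncation and mollification to `C¹` functions `f` with compact support. For these,
Prékopa–Leindler gives Brunn–Minkowski, which bounds from below the volume of the `t`-neighbourhoods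
of the superlevel sets of `|f|`; integrating over the levels and letting `t → 0` gives the
coarea-type bound `N κ_N^{1/N} ∫₀^∞ |{|f| > s}|^{(N-1)/N} ds ≤ ∫ |∇f|`, whose left-hand side
dominates that of the Sobolev inequality.
-/

section

open scoped ENNReal NNReal Pointwise

lemma volume_restrict_Ioi_ofReal_lt (a : ℝ≥0∞) :
    volume.restrict (Set.Ioi 0) {t : ℝ | ENNReal.ofReal t < a} = a := by
  rw [Measure.restrict_apply (measurableSet_lt (by fun_prop) (by fun_prop))]
  obtain rfl | ha := eq_or_ne a ∞
  · simp
  · have hset : {t : ℝ | ENNReal.ofReal t < a} ∩ Set.Ioi 0 = Set.Ioo 0 a.toReal := by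
      ext t
      rw [Set.mem_inter_iff, and_comm]
      exact and_congr_right fun ht => ENNReal.ofReal_lt_iff_lt_toReal (le_of_lt ht) ha
    rw [hset, Real.volume_Ioo, sub_zero, ENNReal.ofReal_toReal ha]

lemma measurableSet_ofReal_lt {X : Type*} [MeasurableSpace X] {f : X → ℝ≥0∞}
    (hf : Measurable f) : MeasurableSet {p : X × ℝ | ENNReal.ofReal p.2 < f p.1} :=
  measurableSet_lt (by fun_prop) (by fun_prop)

-- Both sides are the `μ × dt`-measure of the region under the graph of `f`.
lemma lintegral_eq_lintegral_measure_ofReal_lt {X : Type*} [MeasurableSpace X] (μ : Measure X)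
    [SFinite μ] {f : X → ℝ≥0∞} (hf : Measurable f) :
    ∫⁻ x, f x ∂μ = ∫⁻ t in Set.Ioi (0 : ℝ), μ {x | ENNReal.ofReal t < f x} :=
  calc ∫⁻ x, f x ∂μ
      = (μ.prod (volume.restrict (Set.Ioi 0))) {p | ENNReal.ofReal p.2 < f p.1} := by
        rw [Measure.prod_apply (measurableSet_ofReal_lt hf)]
        exact lintegral_congr fun x => (volume_restrict_Ioi_ofReal_lt (f x)).symm
    _ = ∫⁻ t in Set.Ioi (0 : ℝ), μ {x | ENNReal.ofReal t < f x} :=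
        Measure.prod_apply_symm (measurableSet_ofReal_lt hf)

lemma antitone_measure_ofReal_lt {X : Type*} [MeasurableSpace X] (μ : Measure X)
    (f : X → ℝ≥0∞) : Antitone fun t : ℝ => μ {x | ENNReal.ofReal t < f x} :=
  fun _ _ hst => measure_mono fun _ hx => (ENNReal.ofReal_le_ofReal hst).trans_lt hx

-- The translates `K + min L` and `max K + L` lie in `K + L` and meet in a single point.
lemma volume_add_volume_le_of_isCompact {K L : Set ℝ} (hK : IsCompact K) (hL : IsCompact L)
    (hKne : K.Nonempty) (hLne : L.Nonempty) : volume K + volume L ≤ volume (K + L) := by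
  obtain ⟨M, hM, hMmax⟩ := hK.exists_isGreatest hKne
  obtain ⟨m, hm, hmmin⟩ := hL.exists_isLeast hLne
  have hinter : AEDisjoint volume ((· + m) '' K) ((M + ·) '' L) := by
    refine measure_mono_null (t := {M + m}) ?_ (measure_singleton _)
    rintro z ⟨⟨x, hx, rfl⟩, ⟨y, hy, hxy⟩⟩
    have := hMmax hx
    have := hmmin hy
    simp only [Set.mem_singleton_iff] at *
    linarith
  calc volume K + volume L
      = volume ((· + m) '' K) + volume ((M + ·) '' L) := by
        rw [Set.image_add_right, measure_preimage_add_right, Set.image_add_left,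
          measure_preimage_add]
    _ = volume ((· + m) '' K ∪ (M + ·) '' L) :=
        (measure_union₀ (hL.image (by fun_prop)).measurableSet.nullMeasurableSet hinter).symm
    _ ≤ volume (K + L) := by
        refine measure_mono (Set.union_subset ?_ ?_)
        · exact Set.image_subset_iff.2 fun x hx => Set.add_mem_add hx hm
        · exact Set.image_subset_iff.2 fun y hy => Set.add_mem_add hM hy

lemma volume_add_volume_le_volume_add {A B : Set ℝ} (hA : MeasurableSet A)
    (hB : MeasurableSet B) (hAne : A.Nonempty) (hBne : B.Nonempty) :
    volume A + volume B ≤ volume (A + B) := by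
  obtain ⟨x₀, hx₀⟩ := hAne
  obtain ⟨y₀, hy₀⟩ := hBne
  rw [hA.measure_eq_iSup_isCompact, hB.measure_eq_iSup_isCompact]
  simp only [iSup_and']
  refine ENNReal.biSup_add_biSup_le' ⟨∅, by simp⟩ ⟨∅, by simp⟩ ?_
  rintro K ⟨hKA, hK⟩ L ⟨hLB, hL⟩
  calc volume K + volume L
      ≤ volume (insert x₀ K) + volume (insert y₀ L) := by gcongr <;> exact Set.subset_insert _ _
    _ ≤ volume (insert x₀ K + insert y₀ L) :=
        volume_add_volume_le_of_isCompact (hK.insert x₀) (hL.insert y₀) (Set.insert_nonempty _ _)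
          (Set.insert_nonempty _ _)
    _ ≤ volume (A + B) := by
        gcongr
        exacts [Set.insert_subset hx₀ hKA, Set.insert_subset hy₀ hLB]

lemma geom_mean_le_arith_mean_ofReal {l : ℝ} (hl₀ : 0 < l) (hl₁ : l < 1) (a b : ℝ≥0∞) :
    a ^ (1 - l) * b ^ l ≤ ENNReal.ofReal (1 - l) * a + ENNReal.ofReal l * b := by
  have hl₁' : 0 < 1 - l := sub_pos.2 hl₁
  obtain rfl | ha := eq_or_ne a ∞
  · simp [ENNReal.mul_top, hl₁]
  obtain rfl | hb := eq_or_ne b ∞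
  · simp [ENNReal.mul_top, hl₀]
  lift a to ℝ≥0 using ha
  lift b to ℝ≥0 using hb
  have hmean := NNReal.geom_mean_le_arith_mean2_weighted (1 - l).toNNReal l.toNNReal a b
    (by rw [← Real.toNNReal_add hl₁'.le hl₀.le, sub_add_cancel, Real.toNNReal_one])
  rw [Real.coe_toNNReal _ hl₁'.le, Real.coe_toNNReal _ hl₀.le] at hmean
  rw [← ENNReal.coe_rpow_of_nonneg _ hl₁'.le, ← ENNReal.coe_rpow_of_nonneg _ hl₀.le,
    ENNReal.ofReal, ENNReal.ofReal]
  exact_mod_cast hmean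

/-- The measure `μ` satisfies the Prékopa–Leindler inequality with weights `1 - l` and `l`. -/
def SatisfiesPrekopaLeindler {E : Type*} [AddCommMonoid E] [Module ℝ E] [MeasurableSpace E]
    (l : ℝ) (μ : Measure E) : Prop :=
  ∀ ⦃f g h : E → ℝ≥0∞⦄, Measurable f → Measurable g → Measurable h →
    (∀ x y, f x ^ (1 - l) * g y ^ l ≤ h ((1 - l) • x + l • y)) →
    (∫⁻ x, f x ∂μ) ^ (1 - l) * (∫⁻ x, g x ∂μ) ^ l ≤ ∫⁻ x, h x ∂μ

section RealLine

variable {l : ℝ} {f g h : ℝ → ℝ≥0∞}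

lemma ofReal_mul_volume_add_le_volume_superlevel (hl₀ : 0 < l) (hl₁ : l < 1) (hf : Measurable f)
    (hg : Measurable g) (hfgh : ∀ x y, f x ^ (1 - l) * g y ^ l ≤ h ((1 - l) • x + l • y))
    {s : ℝ≥0∞} (hs : s ≠ 0) (hsf : s < ⨆ x, f x) (hsg : s < ⨆ x, g x) :
    ENNReal.ofReal (1 - l) * volume {x | s < f x} + ENNReal.ofReal l * volume {x | s < g x} ≤
      volume {x | s < h x} := by
  have hl₁' : 0 < 1 - l := sub_pos.2 hl₁
  have volume_smul {c : ℝ} (hc : 0 < c) (A : Set ℝ) :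
      ENNReal.ofReal c * volume A = volume (c • A) := by
    simp [Measure.addHaar_smul, abs_of_pos hc]
  rw [volume_smul hl₁', volume_smul hl₀]
  refine (volume_add_volume_le_volume_add ((measurableSet_lt measurable_const hf).const_smul₀ _)
    ((measurableSet_lt measurable_const hg).const_smul₀ _)
    (Set.Nonempty.smul_set (lt_iSup_iff.1 hsf))
    (Set.Nonempty.smul_set (lt_iSup_iff.1 hsg))).trans (measure_mono ?_)
  rintro _ ⟨_, ⟨x, hx, rfl⟩, _, ⟨y, hy, rfl⟩, rfl⟩
  calc s = s ^ (1 - l) * s ^ l := by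
        rw [← ENNReal.rpow_add _ _ hs hsf.ne_top, sub_add_cancel, ENNReal.rpow_one]
    _ < f x ^ (1 - l) * g y ^ l :=
        ENNReal.mul_lt_mul (ENNReal.rpow_lt_rpow hx hl₁') (ENNReal.rpow_lt_rpow hy hl₀)
    _ ≤ h ((1 - l) • x + l • y) := hfgh x y

lemma ofReal_mul_lintegral_add_le_of_iSup_eq_one (hl₀ : 0 < l) (hl₁ : l < 1) (hf : Measurable f)
    (hg : Measurable g) (hh : Measurable h)
    (hfgh : ∀ x y, f x ^ (1 - l) * g y ^ l ≤ h ((1 - l) • x + l • y))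
    (hf₁ : ⨆ x, f x = 1) (hg₁ : ⨆ x, g x = 1) :
    ENNReal.ofReal (1 - l) * (∫⁻ x, f x) + ENNReal.ofReal l * (∫⁻ x, g x) ≤ ∫⁻ x, h x := by
  simp only [lintegral_eq_lintegral_measure_ofReal_lt volume hf,
    lintegral_eq_lintegral_measure_ofReal_lt volume hg,
    lintegral_eq_lintegral_measure_ofReal_lt volume hh]
  rw [← lintegral_const_mul' _ _ ENNReal.ofReal_ne_top,
    ← lintegral_const_mul' _ _ ENNReal.ofReal_ne_top, ← lintegral_add_left
      ((antitone_measure_ofReal_lt volume f).measurable.const_mul _)]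
  refine setLIntegral_mono' measurableSet_Ioi fun t (ht : 0 < t) => ?_
  obtain ht₁ | ht₁ := lt_or_ge t 1
  · have : ENNReal.ofReal t < 1 := ENNReal.ofReal_lt_one.2 ht₁
    exact ofReal_mul_volume_add_le_volume_superlevel hl₀ hl₁ hf hg hfgh
      (ENNReal.ofReal_pos.2 ht).ne' (hf₁ ▸ this) (hg₁ ▸ this)
  · have superlevel_empty {k : ℝ → ℝ≥0∞} (hk : ⨆ x, k x = 1) :
        {x | ENNReal.ofReal t < k x} = ∅ :=
      Set.eq_empty_iff_forall_notMem.2 fun x => not_lt.2 <|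
        (le_iSup k x).trans (hk.trans_le (ENNReal.one_le_ofReal.2 ht₁))
    simp [superlevel_empty hf₁, superlevel_empty hg₁]

lemma lintegral_rpow_mul_lintegral_rpow_le_of_iSup_ne_top (hl₀ : 0 < l) (hl₁ : l < 1)
    (hf : Measurable f) (hg : Measurable g) (hh : Measurable h)
    (hfgh : ∀ x y, f x ^ (1 - l) * g y ^ l ≤ h ((1 - l) • x + l • y))
    (hf_top : ⨆ x, f x ≠ ∞) (hg_top : ⨆ x, g x ≠ ∞) :
    (∫⁻ x, f x) ^ (1 - l) * (∫⁻ x, g x) ^ l ≤ ∫⁻ x, h x := by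
  have hl₁' : 0 < 1 - l := sub_pos.2 hl₁
  set F := ⨆ x, f x
  set G := ⨆ x, g x
  obtain hF₀ | hF₀ := eq_or_ne F 0
  · simp [ENNReal.iSup_eq_zero.1 hF₀, hl₁]
  obtain hG₀ | hG₀ := eq_or_ne G 0
  · simp [ENNReal.iSup_eq_zero.1 hG₀, hl₀]
  set c := F⁻¹ ^ (1 - l) * G⁻¹ ^ l with hc
  have hc₀ : c ≠ 0 := by simp [hc, ENNReal.rpow_eq_zero_iff, hF₀, hG₀, hf_top, hg_top]
  have hc_top : c ≠ ∞ := ENNReal.mul_ne_top (by simp [hF₀, hf_top]) (by simp [hG₀, hg_top])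
  have rpow_mul_rpow (u v : ℝ≥0∞) :
      (F⁻¹ * u) ^ (1 - l) * (G⁻¹ * v) ^ l = c * (u ^ (1 - l) * v ^ l) := by
    rw [ENNReal.mul_rpow_of_nonneg _ _ hl₁'.le, ENNReal.mul_rpow_of_nonneg _ _ hl₀.le,
      mul_mul_mul_comm]
  have hnormalized := ofReal_mul_lintegral_add_le_of_iSup_eq_one hl₀ hl₁ (hf.const_mul F⁻¹)
    (hg.const_mul G⁻¹) (hh.const_mul c)
    (fun x y => (rpow_mul_rpow _ _).trans_le (mul_le_mul_right (hfgh x y) c))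
    (by rw [← ENNReal.mul_iSup, ENNReal.inv_mul_cancel hF₀ hf_top])
    (by rw [← ENNReal.mul_iSup, ENNReal.inv_mul_cancel hG₀ hg_top])
  rw [lintegral_const_mul _ hf, lintegral_const_mul _ hg, lintegral_const_mul _ hh] at hnormalized
  refine (ENNReal.mul_le_mul_iff_right hc₀ hc_top).1 ?_
  rw [← rpow_mul_rpow]
  exact (geom_mean_le_arith_mean_ofReal hl₀ hl₁ _ _).trans hnormalized

lemma lintegral_eq_iSup_lintegral_min_natCast {X : Type*} [MeasurableSpace X] (μ : Measure X)
    {f : X → ℝ≥0∞} (hf : Measurable f) : ∫⁻ x, f x ∂μ = ⨆ n : ℕ, ∫⁻ x, min (f x) n ∂μ := by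
  rw [← lintegral_iSup (fun n => hf.min measurable_const)
    fun m n hmn x => min_le_min_left _ (by exact_mod_cast hmn)]
  simp_rw [← inf_iSup_eq, ENNReal.iSup_natCast, inf_top_eq]

lemma satisfiesPrekopaLeindler_real (hl₀ : 0 < l) (hl₁ : l < 1) :
    SatisfiesPrekopaLeindler l (volume : Measure ℝ) := by
  intro f g h hf hg hh hfgh
  have hl₁' : 0 < 1 - l := sub_pos.2 hl₁
  have iSup_min_ne_top (k : ℝ → ℝ≥0∞) (n : ℕ) : ⨆ x, min (k x) n ≠ ∞ :=
    ((iSup_le fun _ => min_le_right _ _).trans_lt (ENNReal.natCast_lt_top n)).ne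
  have monotone_rpow {s : ℝ} (hs : 0 ≤ s) (k : ℝ → ℝ≥0∞) :
      Monotone fun n : ℕ => (∫⁻ x, min (k x) n) ^ s := fun m n hmn => by
    dsimp only; gcongr
  have truncated (n : ℕ) :
      (∫⁻ x, min (f x) n) ^ (1 - l) * (∫⁻ x, min (g x) n) ^ l ≤ ∫⁻ x, h x := by
    refine lintegral_rpow_mul_lintegral_rpow_le_of_iSup_ne_top hl₀ hl₁ (hf.min measurable_const)
      (hg.min measurable_const) hh (fun x y => (mul_le_mul' ?_ ?_).trans (hfgh x y))
      (iSup_min_ne_top f n) (iSup_min_ne_top g n)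
    exacts [ENNReal.rpow_le_rpow (min_le_left _ _) hl₁'.le,
      ENNReal.rpow_le_rpow (min_le_left _ _) hl₀.le]
  have iSup_rpow {s : ℝ} (hs : 0 < s) (k : ℕ → ℝ≥0∞) : (⨆ n, k n) ^ s = ⨆ n, k n ^ s :=
    (ENNReal.orderIsoRpow s hs).map_iSup k
  rw [lintegral_eq_iSup_lintegral_min_natCast _ hf, lintegral_eq_iSup_lintegral_min_natCast _ hg,
    iSup_rpow hl₁', iSup_rpow hl₀, ENNReal.iSup_mul]
  refine iSup_le fun i => ?_
  rw [ENNReal.mul_iSup]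
  refine iSup_le fun j => (mul_le_mul' ?_ ?_).trans (truncated (max i j))
  exacts [monotone_rpow hl₁'.le f (le_max_left i j), monotone_rpow hl₀.le g (le_max_right i j)]

end RealLine

lemma SatisfiesPrekopaLeindler.prod {E F : Type*} [AddCommMonoid E] [Module ℝ E]
    [MeasurableSpace E] [AddCommMonoid F] [Module ℝ F] [MeasurableSpace F] {l : ℝ}
    {μ : Measure E} {ν : Measure F} [SFinite ν] (hμ : SatisfiesPrekopaLeindler l μ)
    (hν : SatisfiesPrekopaLeindler l ν) : SatisfiesPrekopaLeindler l (μ.prod ν) := by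
  intro f g h hf hg hh hfgh
  simp only [lintegral_prod _ hf.aemeasurable, lintegral_prod _ hg.aemeasurable,
    lintegral_prod _ hh.aemeasurable]
  refine hμ hf.lintegral_prod_right' hg.lintegral_prod_right' hh.lintegral_prod_right'
    fun x x' => ?_
  exact hν (hf.comp measurable_prodMk_left) (hg.comp measurable_prodMk_left)
    (hh.comp measurable_prodMk_left) fun y y' => hfgh (x, y) (x', y')

lemma SatisfiesPrekopaLeindler.of_measurePreserving {E F : Type*} [AddCommMonoid E] [Module ℝ E]
    [MeasurableSpace E] [AddCommMonoid F] [Module ℝ F] [MeasurableSpace F] {l : ℝ}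
    {μ : Measure E} {ν : Measure F} (hμ : SatisfiesPrekopaLeindler l μ) (T : E →ₗ[ℝ] F)
    (hT : MeasurePreserving T μ ν) : SatisfiesPrekopaLeindler l ν := by
  intro f g h hf hg hh hfgh
  rw [← hT.lintegral_comp hf, ← hT.lintegral_comp hg, ← hT.lintegral_comp hh]
  refine hμ (hf.comp hT.measurable) (hg.comp hT.measurable) (hh.comp hT.measurable)
    fun x y => ?_
  rw [map_add, map_smul, map_smul]
  exact hfgh (T x) (T y)

lemma measurePreserving_finConsLinearEquiv (n : ℕ) :
    MeasurePreserving (Fin.consLinearEquiv ℝ fun _ : Fin (n + 1) => ℝ) := by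
  have hcons : ⇑(MeasurableEquiv.piFinSuccAbove (fun _ : Fin (n + 1) => ℝ) 0).symm =
      Fin.consLinearEquiv ℝ fun _ : Fin (n + 1) => ℝ := by
    ext p : 1
    simp [MeasurableEquiv.piFinSuccAbove]
    rfl
  exact hcons ▸ (volume_preserving_piFinSuccAbove (fun _ : Fin (n + 1) => ℝ) 0).symm

lemma satisfiesPrekopaLeindler_pi {l : ℝ} (hl₀ : 0 < l) (hl₁ : l < 1) (n : ℕ) :
    SatisfiesPrekopaLeindler l (volume : Measure (Fin n → ℝ)) := by
  induction n with
  | zero =>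
    intro f g h _ _ _ hfgh
    simpa [volume_pi, Measure.pi_of_empty (x := 0), lintegral_dirac] using hfgh 0 0
  | succ n ih =>
    exact ((satisfiesPrekopaLeindler_real hl₀ hl₁).prod ih).of_measurePreserving _
      (measurePreserving_finConsLinearEquiv n)

lemma satisfiesPrekopaLeindler_euc {l : ℝ} (hl₀ : 0 < l) (hl₁ : l < 1) (N : ℕ) :
    SatisfiesPrekopaLeindler l (volume : Measure (Euc N)) :=
  (satisfiesPrekopaLeindler_pi hl₀ hl₁ N).of_measurePreserving
    (WithLp.linearEquiv 2 ℝ (Fin N → ℝ)).symm.toLinearMap (PiLp.volume_preserving_toLp (Fin N))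

lemma SatisfiesPrekopaLeindler.measure_rpow_mul_measure_rpow_le {E : Type*} [AddCommMonoid E]
    [Module ℝ E] [MeasurableSpace E] {l : ℝ} {μ : Measure E} (hμ : SatisfiesPrekopaLeindler l μ)
    (hl₀ : 0 < l) (hl₁ : l < 1) {A B C : Set E} (hA : MeasurableSet A) (hB : MeasurableSet B)
    (hC : MeasurableSet C) (hABC : (1 - l) • A + l • B ⊆ C) :
    μ A ^ (1 - l) * μ B ^ l ≤ μ C := by
  rw [← lintegral_indicator_one hA, ← lintegral_indicator_one hB, ← lintegral_indicator_one hC]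
  refine hμ (measurable_one.indicator hA) (measurable_one.indicator hB)
    (measurable_one.indicator hC) fun x y => ?_
  by_cases hx : x ∈ A
  · by_cases hy : y ∈ B
    · have hmem : (1 - l) • x + l • y ∈ C :=
        hABC (Set.add_mem_add (Set.smul_mem_smul_set hx) (Set.smul_mem_smul_set hy))
      simp [hx, hy, hmem]
    · simp [hy, hl₀]
  · simp [hx, hl₁]

/-- The volume `κ_N` of the unit ball of `ℝ^N`, so that `omegaS N = N * unitBallVolume N`. -/
def unitBallVolume (N : ℕ) : ℝ := (volume (Metric.ball (0 : Euc N) 1)).toReal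

/-- The isoperimetric constant `N κ_N^{1/N}`: the perimeter of a ball of volume `v` is
`isoConst N * v ^ ((N - 1) / N)`. -/
def isoConst (N : ℕ) : ℝ := N * unitBallVolume N ^ (1 / (N : ℝ))

lemma unitBallVolume_pos (N : ℕ) : 0 < unitBallVolume N :=
  ENNReal.toReal_pos (Metric.measure_ball_pos volume _ one_pos).ne' measure_ball_lt_top.ne

lemma isoConst_pos {N : ℕ} (hN : N ≠ 0) : 0 < isoConst N := by
  have := unitBallVolume_pos N
  unfold isoConst
  positivity

lemma volume_ball_eq_ofReal {N : ℕ} (x : Euc N) {t : ℝ} (ht : 0 < t) :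
    volume (Metric.ball x t) = ENNReal.ofReal (t ^ N * unitBallVolume N) := by
  rw [Measure.addHaar_ball_of_pos _ _ ht, ENNReal.ofReal_mul (by positivity), unitBallVolume,
    ENNReal.ofReal_toReal measure_ball_lt_top.ne, finrank_euclideanSpace_fin]

lemma volume_smul_euc {N : ℕ} {c : ℝ} (hc : 0 ≤ c) (A : Set (Euc N)) :
    volume (c • A) = ENNReal.ofReal (c ^ N) * volume A := by
  rw [Measure.addHaar_smul, finrank_euclideanSpace_fin, abs_of_nonneg (pow_nonneg hc N)]

-- Prékopa–Leindler for the dilates of `A` and `B` that both have volume `(p + r) ^ N`.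
lemma ofReal_add_pow_le_volume {N : ℕ} {A B C : Set (Euc N)} (hA : MeasurableSet A)
    (hB : MeasurableSet B) (hC : MeasurableSet C) (hABC : A + B ⊆ C) {p r : ℝ} (hp : 0 < p)
    (hr : 0 < r) (hvA : volume A = ENNReal.ofReal (p ^ N))
    (hvB : volume B = ENNReal.ofReal (r ^ N)) : ENNReal.ofReal ((p + r) ^ N) ≤ volume C := by
  set s := p + r
  have hs₀ : 0 < s := by positivity
  have hl : 1 - r / s = p / s := by field_simp; linarith
  have volume_dilate {u : ℝ} (hu : 0 < u) {D : Set (Euc N)}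
      (hD : volume D = ENNReal.ofReal (u ^ N)) :
      volume ((s / u) • D) = ENNReal.ofReal (s ^ N) := by
    rw [volume_smul_euc (by positivity), hD, ← ENNReal.ofReal_mul (by positivity), ← mul_pow,
      div_mul_cancel₀ _ hu.ne']
  have hl₁ : r / s < 1 := (div_lt_one hs₀).2 (by linarith)
  have hmul := (satisfiesPrekopaLeindler_euc (div_pos hr hs₀) hl₁
      N).measure_rpow_mul_measure_rpow_le (A := (s / p) • A) (B := (s / r) • B)
    (div_pos hr hs₀) hl₁ (hA.const_smul₀ _) (hB.const_smul₀ _) hC (by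
      rw [hl, smul_smul, smul_smul, div_mul_div_cancel₀ hs₀.ne', div_mul_div_cancel₀ hs₀.ne',
        div_self hp.ne', div_self hr.ne', one_smul, one_smul]
      exact hABC)
  rwa [volume_dilate hp hvA, volume_dilate hr hvB, ← ENNReal.rpow_add _ _
    (ENNReal.ofReal_pos.2 (by positivity)).ne' ENNReal.ofReal_ne_top, sub_add_cancel,
    ENNReal.rpow_one] at hmul

lemma pow_add_mul_mul_pow_le_add_pow {p s : ℝ} (hp : 0 < p) (hs : 0 ≤ s) {N : ℕ} (hN : N ≠ 0) :
    p ^ N + N * s * p ^ (N - 1) ≤ (p + s) ^ N := by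
  have hsp : 0 ≤ s / p := by positivity
  calc p ^ N + N * s * p ^ (N - 1) = p ^ N * (1 + N * (s / p)) := by
        rw [← pow_sub_one_mul hN p]
        field_simp
    _ ≤ p ^ N * (1 + s / p) ^ N := by
        gcongr
        exact one_add_mul_le_pow (by linarith) N
    _ = (p + s) ^ N := by rw [← mul_pow, mul_add, mul_one, mul_div_cancel₀ _ hp.ne']

lemma rpow_inv_natCast_pow_sub_one {v : ℝ} (hv : 0 ≤ v) {N : ℕ} (hN : N ≠ 0) :
    (v ^ (1 / (N : ℝ))) ^ (N - 1) = v ^ (((N : ℝ) - 1) / N) := by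
  rw [← Real.rpow_natCast, ← Real.rpow_mul hv, Nat.cast_sub (Nat.one_le_iff_ne_zero.2 hN)]
  congr 1
  push_cast
  ring

lemma volume_add_le_volume_thickening {N : ℕ} (hN : 2 ≤ N) {A : Set (Euc N)}
    (hA : MeasurableSet A) {t : ℝ} (ht : 0 < t) :
    volume A + ENNReal.ofReal t * ENNReal.ofReal (isoConst N) * volume A ^ (((N : ℝ) - 1) / N) ≤
      volume (Metric.thickening t A) := by
  have hN₀ : N ≠ 0 := by omega
  have hexp : 0 < ((N : ℝ) - 1) / N := by
    have : (2 : ℝ) ≤ N := by exact_mod_cast hN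
    exact div_pos (by linarith) (by linarith)
  obtain hA₀ | hA₀ := eq_or_ne (volume A) 0
  · simp [hA₀, hexp]
  obtain hA_top | hA_top := eq_or_ne (volume A) ∞
  · exact (top_unique (hA_top ▸ measure_mono (Metric.self_subset_thickening ht A))).symm ▸ le_top
  have hκ := unitBallVolume_pos N
  have hiso := isoConst_pos hN₀
  set v := (volume A).toReal
  have hv₀ : 0 < v := ENNReal.toReal_pos hA₀ hA_top
  have hvA : volume A = ENNReal.ofReal v := (ENNReal.ofReal_toReal hA_top).symm
  set p := v ^ (1 / (N : ℝ)) with hp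
  set β := unitBallVolume N ^ (1 / (N : ℝ)) with hβ
  have hpN : p ^ N = v := by rw [hp, one_div, Real.rpow_inv_natCast_pow hv₀.le hN₀]
  have hβN : β ^ N = unitBallVolume N := by rw [hβ, one_div, Real.rpow_inv_natCast_pow hκ.le hN₀]
  have hbm : ENNReal.ofReal ((p + t * β) ^ N) ≤ volume (Metric.thickening t A) :=
    ofReal_add_pow_le_volume hA Metric.isOpen_ball.measurableSet
      Metric.isOpen_thickening.measurableSet (add_ball_zero t A).subset (by positivity)
      (by positivity) (by rw [hvA, hpN]) (by rw [volume_ball_eq_ofReal 0 ht, mul_pow, hβN])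
  refine le_trans ?_ hbm
  rw [hvA, ENNReal.ofReal_rpow_of_pos hv₀, ← ENNReal.ofReal_mul ht.le,
    ← ENNReal.ofReal_mul (by positivity), ← ENNReal.ofReal_add hv₀.le (by positivity)]
  refine ENNReal.ofReal_le_ofReal ?_
  calc v + t * isoConst N * v ^ (((N : ℝ) - 1) / N) = p ^ N + N * (t * β) * p ^ (N - 1) := by
        rw [hpN, ← rpow_inv_natCast_pow_sub_one hv₀.le hN₀, isoConst]
        ring
    _ ≤ (p + t * β) ^ N := pow_add_mul_mul_pow_le_add_pow (by positivity) (by positivity) hN₀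

section SobolevSmooth

lemma lintegral_rpow_le_lintegral_measure_rpow_mul {X : Type*} [MeasurableSpace X] (μ : Measure X)
    [SFinite μ] {g : X → ℝ≥0∞} (hg : Measurable g) {p : ℝ} (hp : 1 ≤ p)
    (hfin : ∫⁻ x, g x ^ p ∂μ ≠ ∞) :
    ∫⁻ x, g x ^ p ∂μ ≤ (∫⁻ t in Set.Ioi (0 : ℝ), μ {x | ENNReal.ofReal t < g x} ^ (1 / p)) *
      (∫⁻ x, g x ^ p ∂μ) ^ (1 - 1 / p) := by
  have hp₀ : 0 < p := zero_lt_one.trans_le hp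
  have hp' : 1 / p ≤ 1 := (div_le_one hp₀).2 hp
  have mul_one_sub : p * (1 - 1 / p) = p - 1 := by field_simp
  have holder {S : Set X} (hS : MeasurableSet S) :
      ∫⁻ x in S, g x ^ (p - 1) ∂μ ≤ μ S ^ (1 / p) * (∫⁻ x, g x ^ p ∂μ) ^ (1 - 1 / p) := by
    rw [← lintegral_indicator hS, ← lintegral_indicator_one hS]
    refine le_trans (le_of_eq (lintegral_congr fun x => ?_)) (ENNReal.lintegral_mul_norm_pow_le
      (measurable_one.indicator hS).aemeasurable (hg.pow_const p).aemeasurable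
      (one_div_nonneg.2 hp₀.le) (sub_nonneg.2 hp') (add_sub_cancel _ _))
    rw [← ENNReal.rpow_mul, mul_one_sub]
    by_cases hx : x ∈ S
    · simp [hx]
    · simp [hx, hp₀]
  calc ∫⁻ x, g x ^ p ∂μ
      = ∫⁻ x, g x ∂μ.withDensity fun x => g x ^ (p - 1) := by
        rw [lintegral_withDensity_eq_lintegral_mul _ (by fun_prop) hg]
        refine lintegral_congr fun x => ?_
        simpa using ENNReal.rpow_add_of_nonneg (x := g x) (p - 1) 1 (sub_nonneg.2 hp) zero_le_one
    _ = ∫⁻ t in Set.Ioi (0 : ℝ), ∫⁻ x in {x | ENNReal.ofReal t < g x}, g x ^ (p - 1) ∂μ := by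
        rw [lintegral_eq_lintegral_measure_ofReal_lt _ hg]
        simp only [withDensity_apply _ (measurableSet_lt measurable_const hg)]
    _ ≤ ∫⁻ t in Set.Ioi (0 : ℝ), μ {x | ENNReal.ofReal t < g x} ^ (1 / p) *
          (∫⁻ x, g x ^ p ∂μ) ^ (1 - 1 / p) :=
        lintegral_mono fun t => holder (measurableSet_lt measurable_const hg)
    _ = _ := lintegral_mul_const' _ _ (ENNReal.rpow_ne_top_of_nonneg (sub_nonneg.2 hp') hfin)

lemma lintegral_rpow_rpow_le_lintegral_measure_rpow {X : Type*} [MeasurableSpace X]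
    (μ : Measure X) [SFinite μ] {g : X → ℝ≥0∞} (hg : Measurable g) {p : ℝ} (hp : 1 ≤ p)
    (hfin : ∫⁻ x, g x ^ p ∂μ ≠ ∞) :
    (∫⁻ x, g x ^ p ∂μ) ^ (1 / p) ≤
      ∫⁻ t in Set.Ioi (0 : ℝ), μ {x | ENNReal.ofReal t < g x} ^ (1 / p) := by
  have hp₀ : 0 < p := zero_lt_one.trans_le hp
  have hp' : 0 ≤ 1 - 1 / p := sub_nonneg.2 ((div_le_one hp₀).2 hp)
  set J := ∫⁻ x, g x ^ p ∂μ
  obtain hJ₀ | hJ₀ := eq_or_ne J 0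
  · simp [hJ₀, hp₀]
  refine (ENNReal.mul_le_mul_iff_left (c := J ^ (1 - 1 / p)) ?_
    (ENNReal.rpow_ne_top_of_nonneg hp' hfin)).1 ?_
  · simp [ENNReal.rpow_eq_zero_iff, hJ₀, hfin]
  · rw [← ENNReal.rpow_add _ _ hJ₀ hfin, add_sub_cancel, ENNReal.rpow_one]
    exact lintegral_rpow_le_lintegral_measure_rpow_mul μ hg hp hfin

/-- The supremum of `g` over the ball of radius `t` around each point. Its superlevel sets are the
`t`-thickenings of those of `g`, which is how Brunn–Minkowski enters the Sobolev inequality. -/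
def ballSup {X : Type*} [PseudoMetricSpace X] (g : X → ℝ≥0∞) (t : ℝ) (x : X) : ℝ≥0∞ :=
  ⨆ y ∈ Metric.ball x t, g y

lemma setOf_lt_ballSup {X : Type*} [PseudoMetricSpace X] (g : X → ℝ≥0∞) (t : ℝ) (s : ℝ≥0∞) :
    {x | s < ballSup g t x} = Metric.thickening t {y | s < g y} := by
  ext x
  simp only [ballSup, Set.mem_ofPred_eq, lt_iSup_iff, Metric.mem_thickening_iff, exists_prop,
    Metric.mem_ball, dist_comm x, and_comm]

lemma measurable_ballSup {X : Type*} [PseudoMetricSpace X] [MeasurableSpace X]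
    [OpensMeasurableSpace X] (g : X → ℝ≥0∞) (t : ℝ) : Measurable (ballSup g t) := by
  refine measurable_of_Ioi fun s => ?_
  change MeasurableSet {x | s < ballSup g t x}
  rw [setOf_lt_ballSup]
  exact Metric.isOpen_thickening.measurableSet

lemma lintegral_add_le_lintegral_ballSup {N : ℕ} (hN : 2 ≤ N) {g : Euc N → ℝ≥0∞}
    (hg : Measurable g) {t : ℝ} (ht : 0 < t) :
    (∫⁻ x, g x) + ENNReal.ofReal t * (ENNReal.ofReal (isoConst N) * ∫⁻ s in Set.Ioi (0 : ℝ),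
      volume {x | ENNReal.ofReal s < g x} ^ (((N : ℝ) - 1) / N)) ≤ ∫⁻ x, ballSup g t x := by
  rw [lintegral_eq_lintegral_measure_ofReal_lt _ hg,
    lintegral_eq_lintegral_measure_ofReal_lt _ (measurable_ballSup g t), ← mul_assoc,
    ← lintegral_const_mul' _ _ (ENNReal.mul_ne_top ENNReal.ofReal_ne_top ENNReal.ofReal_ne_top),
    ← lintegral_add_left (antitone_measure_ofReal_lt _ _).measurable]
  refine lintegral_mono fun s => ?_
  rw [setOf_lt_ballSup]
  exact volume_add_le_volume_thickening hN (measurableSet_lt measurable_const hg) ht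

lemma norm_le_norm_add_of_dist_fderiv_le {E F : Type*} [NormedAddCommGroup E] [NormedSpace ℝ E]
    [NormedAddCommGroup F] [NormedSpace ℝ F] {f : E → F} (hf : Differentiable ℝ f) {x y : E}
    {t ε : ℝ} (hε : ∀ z ∈ Metric.ball x t, dist (fderiv ℝ f x) (fderiv ℝ f z) ≤ ε)
    (hy : y ∈ Metric.ball x t) : ‖f y‖ ≤ ‖f x‖ + t * (‖fderiv ℝ f x‖ + ε) := by
  have ht : 0 < t := Metric.pos_of_mem_ball hy
  have hε₀ : 0 ≤ ε := dist_nonneg.trans (hε y hy)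
  have hmean : ‖f y - f x‖ ≤ (‖fderiv ℝ f x‖ + ε) * ‖y - x‖ := by
    refine (convex_ball x t).norm_image_sub_le_of_norm_fderiv_le (𝕜 := ℝ) (fun z _ => hf z)
      (fun z hz => ?_) (Metric.mem_ball_self ht) hy
    refine (norm_le_norm_add_norm_sub (fderiv ℝ f x) _).trans ?_
    rw [← dist_eq_norm]
    gcongr
    exact hε z hz
  calc ‖f y‖ ≤ ‖f x‖ + ‖f y - f x‖ := norm_le_norm_add_norm_sub' _ _
    _ ≤ ‖f x‖ + (‖fderiv ℝ f x‖ + ε) * ‖y - x‖ := by gcongr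
    _ ≤ ‖f x‖ + t * (‖fderiv ℝ f x‖ + ε) := by
        rw [mul_comm]
        gcongr
        exact (mem_ball_iff_norm.1 hy).le

lemma ballSup_enorm_le_of_dist_fderiv_le {E F : Type*} [NormedAddCommGroup E] [NormedSpace ℝ E]
    [NormedAddCommGroup F] [NormedSpace ℝ F] {f : E → F} (hf : Differentiable ℝ f) {t : ℝ}
    (ht : t ≤ 1) {ε : ℝ≥0} (hε : ∀ x y, dist x y < t → dist (fderiv ℝ f x) (fderiv ℝ f y) ≤ ε)
    (x : E) :
    ballSup (fun y => ‖f y‖ₑ) t x ≤ ‖f x‖ₑ + ENNReal.ofReal t *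
      (‖fderiv ℝ f x‖ₑ +
        (Metric.cthickening 1 (tsupport f)).indicator (fun _ => (ε : ℝ≥0∞)) x) := by
  refine iSup₂_le fun y hy => ?_
  have ht₀ : 0 < t := Metric.pos_of_mem_ball hy
  by_cases hx : x ∈ Metric.cthickening 1 (tsupport f)
  · have hle := ENNReal.ofReal_le_ofReal (norm_le_norm_add_of_dist_fderiv_le hf
      (fun z hz => hε x z (Metric.mem_ball'.1 hz)) hy)
    rw [ENNReal.ofReal_add (by positivity) (by positivity), ENNReal.ofReal_mul ht₀.le,
      ENNReal.ofReal_add (by positivity) (by positivity), ofReal_norm, ofReal_norm,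
      ofReal_norm, ENNReal.ofReal_coe_nnreal] at hle
    rwa [Set.indicator_of_mem hx]
  · have hfy : f y = 0 := by
      by_contra hne
      exact hx (Metric.mem_cthickening_of_dist_le x y 1 _ (subset_tsupport f hne)
        ((Metric.mem_ball'.1 hy).le.trans ht))
    simp [hfy]

lemma isoConst_mul_lintegral_volume_rpow_le_add {N : ℕ} (hN : 2 ≤ N) {f : Euc N → ℝ}
    (hf : ContDiff ℝ 1 f) (hfc : HasCompactSupport f) {ε : ℝ≥0} (hε : 0 < ε) :
    ENNReal.ofReal (isoConst N) * ∫⁻ s in Set.Ioi (0 : ℝ),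
      volume {x | ENNReal.ofReal s < ‖f x‖ₑ} ^ (((N : ℝ) - 1) / N) ≤
    (∫⁻ x, ‖fderiv ℝ f x‖ₑ) + ε * volume (Metric.cthickening 1 (tsupport f)) := by
  have hfderiv : Continuous (fderiv ℝ f) := hf.continuous_fderiv one_ne_zero
  obtain ⟨δ, hδ, hδε⟩ := Metric.uniformContinuous_iff.1
    ((hfc.fderiv ℝ).uniformContinuous_of_continuous hfderiv) ε hε
  have ht : 0 < min δ 1 := lt_min hδ one_pos
  have hf_enorm : Measurable fun x => ‖f x‖ₑ := hf.continuous.enorm.measurable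
  have hK : IsCompact (Metric.cthickening 1 (tsupport f)) := hfc.isCompact.cthickening
  have hf_int : Integrable f := hf.continuous.integrable_of_hasCompactSupport hfc
  refine (ENNReal.mul_le_mul_iff_right (ENNReal.ofReal_pos.2 ht).ne' ENNReal.ofReal_ne_top).1 <|
    (ENNReal.add_le_add_iff_left hf_int.2.ne).1 ?_
  calc _ ≤ ∫⁻ x, ballSup (fun y => ‖f y‖ₑ) (min δ 1) x :=
        lintegral_add_le_lintegral_ballSup hN hf_enorm ht
    _ ≤ _ := lintegral_mono (ballSup_enorm_le_of_dist_fderiv_le (hf.differentiable one_ne_zero)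
        (min_le_right _ _) fun x y hxy => (hδε (hxy.trans_le (min_le_left _ _))).le)
    _ = _ := by
        rw [lintegral_add_left hf_enorm, lintegral_const_mul' _ _ ENNReal.ofReal_ne_top,
          lintegral_add_left hfderiv.enorm.measurable, lintegral_indicator_const hK.measurableSet]

lemma isoConst_mul_lintegral_volume_rpow_le {N : ℕ} (hN : 2 ≤ N) {f : Euc N → ℝ}
    (hf : ContDiff ℝ 1 f) (hfc : HasCompactSupport f) :
    ENNReal.ofReal (isoConst N) * ∫⁻ s in Set.Ioi (0 : ℝ),
      volume {x | ENNReal.ofReal s < ‖f x‖ₑ} ^ (((N : ℝ) - 1) / N) ≤ ∫⁻ x, ‖fderiv ℝ f x‖ₑ := by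
  have hK : volume (Metric.cthickening 1 (tsupport f)) ≠ ∞ :=
    hfc.isCompact.cthickening.measure_ne_top
  have hlim : Tendsto (fun ε : ℝ≥0 =>
      (∫⁻ x, ‖fderiv ℝ f x‖ₑ) + ε * volume (Metric.cthickening 1 (tsupport f))) (𝓝[>] 0)
      (𝓝 (∫⁻ x, ‖fderiv ℝ f x‖ₑ)) := by
    refine tendsto_nhdsWithin_of_tendsto_nhds (Continuous.tendsto' ?_ _ _ (by simp))
    exact continuous_const.add ((ENNReal.continuous_mul_const hK).comp ENNReal.continuous_coe)
  exact ge_of_tendsto hlim (eventually_nhdsWithin_of_forall fun ε hε =>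
    isoConst_mul_lintegral_volume_rpow_le_add hN hf hfc hε)

/-- The critical Sobolev exponent `1* = N / (N - 1)` of `BV(ℝ^N)`. -/
def criticalExp (N : ℕ) : ℝ := (N : ℝ) / ((N : ℝ) - 1)

lemma one_lt_criticalExp {N : ℕ} (hN : 2 ≤ N) : 1 < criticalExp N := by
  have : (2 : ℝ) ≤ N := by exact_mod_cast hN
  exact (one_lt_div (by linarith)).2 (by linarith)

lemma isoConst_mul_eLpNorm_le_lintegral_fderiv {N : ℕ} (hN : 2 ≤ N) {f : Euc N → ℝ}
    (hf : ContDiff ℝ 1 f) (hfc : HasCompactSupport f) :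
    ENNReal.ofReal (isoConst N) * eLpNorm f (ENNReal.ofReal (criticalExp N)) volume ≤
      ∫⁻ x, ‖fderiv ℝ f x‖ₑ := by
  have hp := one_lt_criticalExp hN
  have hp₀ : 0 < criticalExp N := zero_lt_one.trans hp
  have hp_ne : ENNReal.ofReal (criticalExp N) ≠ 0 := (ENNReal.ofReal_pos.2 hp₀).ne'
  refine le_trans ?_ (isoConst_mul_lintegral_volume_rpow_le hN hf hfc)
  rw [eLpNorm_eq_lintegral_rpow_enorm_toReal hp_ne ENNReal.ofReal_ne_top,
    ENNReal.toReal_ofReal hp₀.le, ← one_div_div (N : ℝ), ← criticalExp]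
  gcongr
  refine lintegral_rpow_rpow_le_lintegral_measure_rpow _ hf.continuous.enorm.measurable hp.le ?_
  have hfin := (eLpNorm_lt_top_iff_lintegral_rpow_enorm_lt_top hp_ne ENNReal.ofReal_ne_top).1
    (hf.continuous.memLp_of_hasCompactSupport (μ := volume) hfc).2
  rw [ENNReal.toReal_ofReal hp₀.le] at hfin
  exact hfin.ne

end SobolevSmooth

/-- The divergence of a vector field, written so that `TVSet N u` consists by `rfl` of the integrals
`∫ x, u x * divergence ψ x`. -/
def divergence {N : ℕ} (ψ : Euc N → Euc N) (x : Euc N) : ℝ :=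
  ∑ i, fderiv ℝ (fun y => ψ y i) x (EuclideanSpace.single i 1)

section Divergence

variable {N : ℕ} {ψ : Euc N → Euc N}

lemma hasCompactSupport_coord (hψc : HasCompactSupport ψ) (i : Fin N) :
    HasCompactSupport fun x => ψ x i :=
  hψc.comp_left (g := fun v : Euc N => v i) (by simp)

lemma continuous_fderiv_coord_apply (hψ : ContDiff ℝ 1 ψ) (i : Fin N) (v : Euc N) :
    Continuous fun x => fderiv ℝ (fun y => ψ y i) x v :=
  ((contDiff_euclidean.1 hψ i).continuous_fderiv one_ne_zero).clm_apply continuous_const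

lemma continuous_divergence (hψ : ContDiff ℝ 1 ψ) : Continuous (divergence ψ) :=
  continuous_finsetSum _ fun i _ => continuous_fderiv_coord_apply hψ i _

lemma hasCompactSupport_divergence (hψc : HasCompactSupport ψ) :
    HasCompactSupport (divergence ψ) := by
  refine HasCompactSupport.intro hψc fun x hx => Finset.sum_eq_zero fun i _ => ?_
  have hcoord : x ∉ tsupport fun y => ψ y i := fun h =>
    hx (tsupport_comp_subset (g := fun v : Euc N => v i) (by simp) ψ h)
  simp [fderiv_of_notMem_tsupport (𝕜 := ℝ) hcoord]

lemma divergence_comp_add_right (ψ : Euc N → Euc N) (t x : Euc N) :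
    divergence (fun y => ψ (y + t)) x = divergence ψ (x + t) :=
  Finset.sum_congr rfl fun i _ => by rw [fderiv_comp_add_right (f := fun y => ψ y i)]

lemma sum_apply_single_mul (L : Euc N →L[ℝ] ℝ) (v : Euc N) :
    ∑ i, L (EuclideanSpace.single i 1) * v i = L v := by
  conv_rhs => rw [← (EuclideanSpace.basisFun (Fin N) ℝ).sum_repr v, map_sum]
  simp [mul_comm]

lemma divergence_smul {χ : Euc N → ℝ} (hχ : ContDiff ℝ 1 χ) (hψ : ContDiff ℝ 1 ψ) (x : Euc N) :
    divergence (χ • ψ) x = χ x * divergence ψ x + fderiv ℝ χ x (ψ x) := by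
  rw [← sum_apply_single_mul, divergence, divergence, Finset.mul_sum, ← Finset.sum_add_distrib]
  refine Finset.sum_congr rfl fun i _ => ?_
  have hcoord : (fun y => (χ • ψ) y i) = fun y => χ y * ψ y i := rfl
  rw [hcoord, fderiv_fun_mul (hχ.differentiable one_ne_zero x)
    ((contDiff_euclidean.1 hψ i).differentiable one_ne_zero x)]
  simp [mul_comm]

lemma integral_mul_fderiv_coord_eq_neg {C : ℝ≥0} {f : Euc N → ℝ} (hf : LipschitzWith C f)
    (hψ : ContDiff ℝ 1 ψ) (hψc : HasCompactSupport ψ) (i : Fin N) (v : Euc N) :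
    ∫ x, f x * fderiv ℝ (fun y => ψ y i) x v = -∫ x, lineDeriv ℝ f x v * ψ x i := by
  have hψi := contDiff_euclidean.1 hψ i
  have hψic := hasCompactSupport_coord hψc i
  obtain ⟨D, hD⟩ := hψi.lipschitzWith_of_hasCompactSupport hψic one_ne_zero
  rw [LipschitzWith.integral_lineDeriv_mul_eq hf hD hψic, ← integral_neg]
  refine integral_congr_ae (Eventually.of_forall fun x => ?_)
  have hline := (hψi.differentiable one_ne_zero x).lineDeriv_eq_fderiv (v := -v)
  simp only [hline, map_neg]
  ring

lemma integrable_lineDeriv_mul_coord {C : ℝ≥0} {f : Euc N → ℝ} (hf : LipschitzWith C f)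
    (hψ : ContDiff ℝ 1 ψ) (hψc : HasCompactSupport ψ) (i : Fin N) (v : Euc N) :
    Integrable fun x => lineDeriv ℝ f x v * ψ x i :=
  ((contDiff_euclidean.1 hψ i).continuous.integrable_of_hasCompactSupport
    (hasCompactSupport_coord hψc i)).bdd_mul
    (measurable_lineDeriv hf.continuous).aestronglyMeasurable
    (Eventually.of_forall fun _ => norm_lineDeriv_le_of_lipschitz ℝ hf)

lemma ae_sum_lineDeriv_mul_coord_eq_fderiv_apply {C : ℝ≥0} {f : Euc N → ℝ}
    (hf : LipschitzWith C f) (ψ : Euc N → Euc N) :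
    ∀ᵐ x, ∑ i, lineDeriv ℝ f x (EuclideanSpace.single i 1) * ψ x i = fderiv ℝ f x (ψ x) := by
  filter_upwards [hf.ae_differentiableAt (μ := volume)] with x hx
  simp only [hx.lineDeriv_eq_fderiv, sum_apply_single_mul]

lemma integrable_fderiv_apply {C : ℝ≥0} {f : Euc N → ℝ} (hf : LipschitzWith C f)
    (hψ : ContDiff ℝ 1 ψ) (hψc : HasCompactSupport ψ) :
    Integrable fun x => fderiv ℝ f x (ψ x) :=
  (integrable_finsetSum Finset.univ fun i _ =>
    integrable_lineDeriv_mul_coord hf hψ hψc i _).congr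
    (ae_sum_lineDeriv_mul_coord_eq_fderiv_apply hf ψ)

lemma integral_mul_divergence_eq_neg {C : ℝ≥0} {f : Euc N → ℝ} (hf : LipschitzWith C f)
    (hψ : ContDiff ℝ 1 ψ) (hψc : HasCompactSupport ψ) :
    ∫ x, f x * divergence ψ x = -∫ x, fderiv ℝ f x (ψ x) := by
  have hinteg (i : Fin N) : Integrable fun x =>
      f x * fderiv ℝ (fun y => ψ y i) x (EuclideanSpace.single i 1) :=
    (hf.continuous.mul (continuous_fderiv_coord_apply hψ i _)).integrable_of_hasCompactSupport
      ((hasCompactSupport_coord hψc i).fderiv_apply ℝ _).mul_left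
  simp only [divergence, Finset.mul_sum]
  rw [integral_finsetSum _ fun i _ => hinteg i,
    ← integral_congr_ae (ae_sum_lineDeriv_mul_coord_eq_fderiv_apply hf ψ),
    integral_finsetSum _ fun i _ => integrable_lineDeriv_mul_coord hf hψ hψc i _,
    ← Finset.sum_neg_distrib]
  exact Finset.sum_congr rfl fun i _ => integral_mul_fderiv_coord_eq_neg hf hψ hψc i _

end Divergence

/-- A smooth substitute for the unit vector in the direction of `v`, defined also at `v = 0`. -/
def smoothUnit {E : Type*} [SeminormedAddCommGroup E] [NormedSpace ℝ E] (δ : ℝ) (v : E) : E :=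
  (√(δ ^ 2 + ‖v‖ ^ 2))⁻¹ • v

section SmoothUnit

variable {E : Type*}

lemma norm_smoothUnit_le_one [SeminormedAddCommGroup E] [NormedSpace ℝ E] (δ : ℝ) (v : E) :
    ‖smoothUnit δ v‖ ≤ 1 := by
  rw [smoothUnit, norm_smul, Real.norm_of_nonneg (by positivity)]
  exact inv_mul_le_one_of_le₀ (Real.le_sqrt_of_sq_le (by linarith [sq_nonneg δ]))
    (Real.sqrt_nonneg _)

variable {δ : ℝ}

lemma contDiff_smoothUnit [NormedAddCommGroup E] [InnerProductSpace ℝ E] (hδ : 0 < δ)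
    {n : WithTop ℕ∞} : ContDiff ℝ n (smoothUnit δ : E → E) := by
  have hpos (v : E) : 0 < δ ^ 2 + ‖v‖ ^ 2 := by positivity
  exact (((contDiff_const.add (contDiff_norm_sq ℝ)).sqrt fun v => (hpos v).ne').inv
    fun v => (Real.sqrt_pos.2 (hpos v)).ne').smul contDiff_id

lemma norm_sub_le_inner_smoothUnit [SeminormedAddCommGroup E] [InnerProductSpace ℝ E]
    (hδ : 0 < δ) (v : E) : ‖v‖ - δ ≤ inner ℝ v (smoothUnit δ v) := by
  have hsqrt : 0 < √(δ ^ 2 + ‖v‖ ^ 2) := Real.sqrt_pos.2 (by positivity)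
  have hsqrt_le : √(δ ^ 2 + ‖v‖ ^ 2) ≤ ‖v‖ + δ := by
    rw [Real.sqrt_le_left (by positivity)]
    nlinarith [norm_nonneg v]
  rw [smoothUnit, real_inner_smul_right, real_inner_self_eq_norm_sq, le_inv_mul_iff₀ hsqrt]
  rcases le_total δ ‖v‖ with h | h
  · nlinarith
  · nlinarith [mul_nonneg hsqrt.le (sub_nonneg.2 h)]

end SmoothUnit

section SmoothTotalVariation

variable {N : ℕ} {f : Euc N → ℝ} {T : ℝ}

lemma contDiff_gradient (hf : ContDiff ℝ 2 f) : ContDiff ℝ 1 (gradient f) :=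
  (InnerProductSpace.toDual ℝ (Euc N)).symm.contDiff.comp
    (hf.fderiv_right (m := 1) (by norm_num))

lemma integral_inner_smoothUnit_gradient_le (hf : ContDiff ℝ 2 f) (hfc : HasCompactSupport f)
    (hT : T ∈ upperBounds (TVSet N f)) {δ : ℝ} (hδ : 0 < δ) :
    Integrable (fun x => inner ℝ (gradient f x) (smoothUnit δ (gradient f x))) ∧
      ∫ x, inner ℝ (gradient f x) (smoothUnit δ (gradient f x)) ≤ T := by
  have hf1 : ContDiff ℝ 1 f := hf.of_le (by norm_num)
  obtain ⟨C, hC⟩ := hf1.lipschitzWith_of_hasCompactSupport hfc one_ne_zero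
  let ψ : Euc N → Euc N := fun x => -smoothUnit δ (gradient f x)
  have hψ : ContDiff ℝ 1 ψ := ((contDiff_smoothUnit hδ).comp (contDiff_gradient hf)).neg
  have hψc : HasCompactSupport ψ :=
    (hfc.fderiv ℝ).comp_left
      (g := fun L => -smoothUnit δ ((InnerProductSpace.toDual ℝ (Euc N)).symm L))
      (by simp [smoothUnit])
  have hinner : (fun x => inner ℝ (gradient f x) (smoothUnit δ (gradient f x))) =
      fun x => -fderiv ℝ f x (ψ x) := by
    ext x
    rw [map_neg, neg_neg, inner_gradient_left]
  rw [hinner, integral_neg, ← integral_mul_divergence_eq_neg hC hψ hψc]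
  refine ⟨(integrable_fderiv_apply hC hψ hψc).neg, hT ⟨ψ, hψ, hψc, fun x => ?_, rfl⟩⟩
  rw [norm_neg]
  exact norm_smoothUnit_le_one _ _

lemma integral_norm_fderiv_le_add (hf : ContDiff ℝ 2 f) (hfc : HasCompactSupport f)
    (hT : T ∈ upperBounds (TVSet N f)) {δ : ℝ} (hδ : 0 < δ) :
    ∫ x, ‖fderiv ℝ f x‖ ≤ T + δ * volume.real (tsupport f) := by
  obtain ⟨hinteg, hle⟩ := integral_inner_smoothUnit_gradient_le hf hfc hT hδ
  have hmeas : MeasurableSet (tsupport f) := (isClosed_tsupport f).measurableSet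
  have hintegδ : Integrable ((tsupport f).indicator fun _ => δ) :=
    (integrable_indicator_iff hmeas).2 (integrableOn_const (hs := hfc.measure_lt_top.ne))
  have hpointwise (x : Euc N) : ‖fderiv ℝ f x‖ ≤
      inner ℝ (gradient f x) (smoothUnit δ (gradient f x)) +
        (tsupport f).indicator (fun _ => δ) x := by
    by_cases hx : x ∈ tsupport f
    · have hnorm : ‖gradient f x‖ = ‖fderiv ℝ f x‖ := by simp [gradient]
      rw [Set.indicator_of_mem hx, ← hnorm]
      linarith [norm_sub_le_inner_smoothUnit hδ (gradient f x)]
    · simp [hx, gradient, fderiv_of_notMem_tsupport (𝕜 := ℝ) hx]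
  calc ∫ x, ‖fderiv ℝ f x‖
      ≤ ∫ x, (inner ℝ (gradient f x) (smoothUnit δ (gradient f x)) +
          (tsupport f).indicator (fun _ => δ) x) :=
        integral_mono_of_nonneg (Eventually.of_forall fun _ => norm_nonneg _)
          (hinteg.add hintegδ) (Eventually.of_forall hpointwise)
    _ = (∫ x, inner ℝ (gradient f x) (smoothUnit δ (gradient f x))) +
          δ * volume.real (tsupport f) := by
        rw [integral_add hinteg hintegδ, integral_indicator_const _ hmeas, smul_eq_mul, mul_comm δ]
    _ ≤ T + δ * volume.real (tsupport f) := by gcongr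

lemma integral_norm_fderiv_le (hf : ContDiff ℝ 2 f) (hfc : HasCompactSupport f)
    (hT : T ∈ upperBounds (TVSet N f)) : ∫ x, ‖fderiv ℝ f x‖ ≤ T := by
  have hlim : Tendsto (fun δ => T + δ * volume.real (tsupport f)) (𝓝[>] 0) (𝓝 T) :=
    tendsto_nhdsWithin_of_tendsto_nhds <| Continuous.tendsto' (by fun_prop) _ _ (by simp)
  exact ge_of_tendsto hlim <| eventually_mem_nhdsWithin.mono fun _ hδ =>
    integral_norm_fderiv_le_add hf hfc hT hδ

lemma isoConst_mul_eLpNorm_le_of_contDiff (hN : 2 ≤ N) (hf : ContDiff ℝ 2 f)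
    (hfc : HasCompactSupport f) (hT : T ∈ upperBounds (TVSet N f)) :
    ENNReal.ofReal (isoConst N) * eLpNorm f (ENNReal.ofReal (criticalExp N)) volume ≤
      ENNReal.ofReal T := by
  have hf1 : ContDiff ℝ 1 f := hf.of_le (by norm_num)
  have hinteg : Integrable (fderiv ℝ f) :=
    (hf1.continuous_fderiv one_ne_zero).integrable_of_hasCompactSupport (hfc.fderiv ℝ)
  refine (isoConst_mul_eLpNorm_le_lintegral_fderiv hN hf1 hfc).trans ?_
  rw [← ofReal_integral_norm_eq_lintegral_enorm hinteg]
  exact ENNReal.ofReal_le_ofReal (integral_norm_fderiv_le hf hfc hT)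

end SmoothTotalVariation

section Sobolev

open scoped Convolution

variable {N : ℕ} {u : Euc N → ℝ} {T : ℝ}

lemma zero_mem_TVSet (u : Euc N → ℝ) : 0 ∈ TVSet N u :=
  ⟨0, contDiff_const, HasCompactSupport.zero, by simp, by simp⟩

lemma integrable_mul_divergence (hu : Integrable u) {ψ : Euc N → Euc N} (hψ : ContDiff ℝ 1 ψ)
    (hψc : HasCompactSupport ψ) : Integrable fun x => u x * divergence ψ x := by
  obtain ⟨C, hC⟩ := (continuous_divergence hψ).bounded_above_of_compact_support
    (hasCompactSupport_divergence hψc)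
  exact hu.mul_bdd (continuous_divergence hψ).aestronglyMeasurable (Eventually.of_forall hC)

lemma integral_comp_sub_mul_divergence_le (hT : T ∈ upperBounds (TVSet N u)) {ψ : Euc N → Euc N}
    (hψ : ContDiff ℝ 1 ψ) (hψc : HasCompactSupport ψ) (hψ1 : ∀ x, ‖ψ x‖ ≤ 1) (t : Euc N) :
    ∫ x, u (x - t) * divergence ψ x ≤ T := by
  rw [← integral_add_right_eq_self _ t]
  simp only [add_sub_cancel_right, ← divergence_comp_add_right]
  exact hT ⟨fun y => ψ (y + t), hψ.comp (contDiff_id.add contDiff_const),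
    hψc.comp_homeomorph (Homeomorph.addRight t), fun x => hψ1 _, rfl⟩

lemma mem_upperBounds_TVSet_convolution (hu : Integrable u) (hT : T ∈ upperBounds (TVSet N u))
    (φ : ContDiffBump (0 : Euc N)) :
    T ∈ upperBounds (TVSet N (φ.normed volume ⋆[ContinuousLinearMap.lsmul ℝ ℝ, volume] u)) := by
  rintro _ ⟨ψ, hψ, hψc, hψ1, rfl⟩
  obtain ⟨C, hC⟩ := (continuous_divergence hψ).bounded_above_of_compact_support
    (hasCompactSupport_divergence hψc)
  have hφ : Integrable (φ.normed volume) := φ.integrable_normed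
  have hinteg : Integrable (fun p : Euc N × Euc N =>
      φ.normed volume p.2 * u (p.1 - p.2) * divergence ψ p.1) (volume.prod volume) :=
    (hφ.convolution_integrand (ContinuousLinearMap.lsmul ℝ ℝ) hu).mul_bdd
      ((continuous_divergence hψ).comp continuous_fst).aestronglyMeasurable
      (Eventually.of_forall fun p => hC _)
  calc ∫ x, (φ.normed volume ⋆[ContinuousLinearMap.lsmul ℝ ℝ, volume] u) x * divergence ψ x
      = ∫ x, ∫ t, φ.normed volume t * u (x - t) * divergence ψ x := by
        simp only [integral_mul_const]
        rfl
    _ = ∫ t, φ.normed volume t * ∫ x, u (x - t) * divergence ψ x := by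
        rw [integral_integral_swap hinteg]
        simp only [mul_assoc, integral_const_mul]
    _ ≤ ∫ t, φ.normed volume t * T := by
        refine integral_mono ?_ (hφ.mul_const _) fun t => mul_le_mul_of_nonneg_left
          (integral_comp_sub_mul_divergence_le hT hψ hψc hψ1 t) (φ.nonneg_normed t)
        simpa only [mul_assoc, integral_const_mul] using hinteg.integral_prod_right
    _ = T := by rw [integral_mul_const, φ.integral_normed, one_mul]

lemma mul_eLpNorm_le_of_ae_tendsto {α E : Type*} [MeasurableSpace α] [NormedAddCommGroup E]
    {μ : Measure α} {p c B₀ : ℝ≥0∞} {u : α → E} {f : ℕ → α → E} {B : ℕ → ℝ≥0∞}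
    (hf : ∀ k, AEStronglyMeasurable (f k) μ)
    (hlim : ∀ᵐ x ∂μ, Tendsto (fun k => f k x) atTop (𝓝 (u x)))
    (hB : ∀ k, c * eLpNorm (f k) p μ ≤ B k) (hB₀ : Tendsto B atTop (𝓝 B₀)) :
    c * eLpNorm u p μ ≤ B₀ :=
  calc c * eLpNorm u p μ ≤ c * liminf (fun k => eLpNorm (f k) p μ) atTop := by
        gcongr
        exact Lp.eLpNorm_lim_le_liminf_eLpNorm hf u hlim
    _ = liminf (fun _ : ℕ => c) atTop * liminf (fun k => eLpNorm (f k) p μ) atTop := by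
        rw [liminf_const]
    _ ≤ liminf (fun k => c * eLpNorm (f k) p μ) atTop := ENNReal.le_liminf_mul
    _ ≤ liminf B atTop := liminf_le_liminf (Eventually.of_forall hB)
    _ = B₀ := hB₀.liminf_eq

/-- A bump function at the origin whose support shrinks to a point as `k → ∞`. -/
def shrinkingBump (N k : ℕ) : ContDiffBump (0 : Euc N) where
  rIn := 1 / (k + 1)
  rOut := 2 * (1 / (k + 1))
  rIn_pos := by positivity
  rIn_lt_rOut := lt_two_mul_self (by positivity)

lemma isoConst_mul_eLpNorm_le_of_hasCompactSupport (hN : 2 ≤ N) (hu : Integrable u)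
    (hc : HasCompactSupport u) (hT : T ∈ upperBounds (TVSet N u)) :
    ENNReal.ofReal (isoConst N) * eLpNorm u (ENNReal.ofReal (criticalExp N)) volume ≤
      ENNReal.ofReal T := by
  let φ (k : ℕ) := shrinkingBump N k
  let f (k : ℕ) := (φ k).normed volume ⋆[ContinuousLinearMap.lsmul ℝ ℝ, volume] u
  have hsmooth (k : ℕ) : ContDiff ℝ 2 (f k) :=
    (φ k).hasCompactSupport_normed.contDiff_convolution_left _ (φ k).contDiff_normed
      hu.locallyIntegrable
  have hcomp (k : ℕ) : HasCompactSupport (f k) :=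
    (φ k).hasCompactSupport_normed.convolution _ hc
  have hrOut : Tendsto (fun k => (φ k).rOut) atTop (𝓝 0) := by
    simpa [φ, shrinkingBump] using (tendsto_one_div_add_atTop_nhds_zero_nat (𝕜 := ℝ)).const_mul 2
  have hlim : ∀ᵐ x, Tendsto (fun k => f k x) atTop (𝓝 (u x)) :=
    ContDiffBump.ae_convolution_tendsto_right_of_locallyIntegrable (K := 2) hrOut
      (Eventually.of_forall fun k => le_rfl) hu.locallyIntegrable
  exact mul_eLpNorm_le_of_ae_tendsto (fun k => (hsmooth k).continuous.aestronglyMeasurable) hlim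
    (fun k => isoConst_mul_eLpNorm_le_of_contDiff hN (hsmooth k) (hcomp k)
      (mem_upperBounds_TVSet_convolution hu hT (φ k))) tendsto_const_nhds

lemma add_mul_integral_norm_mem_upperBounds_TVSet_mul (hu : Integrable u)
    (hT : T ∈ upperBounds (TVSet N u)) {χ : Euc N → ℝ} (hχ : ContDiff ℝ 1 χ)
    (h1 : ∀ x, ‖χ x‖ ≤ 1) {M : ℝ} (hM : ∀ x, ‖fderiv ℝ χ x‖ ≤ M) :
    T + M * ∫ x, ‖u x‖ ∈ upperBounds (TVSet N fun x => χ x * u x) := by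
  rintro _ ⟨ψ, hψ, hψc, hψ1, rfl⟩
  have hfderiv_le (x : Euc N) : ‖fderiv ℝ χ x (ψ x)‖ ≤ M :=
    ((fderiv ℝ χ x).le_opNorm_of_le (hψ1 x)).trans (by simpa using hM x)
  have hint_div : Integrable fun x => u x * divergence (χ • ψ) x :=
    integrable_mul_divergence hu (hχ.smul hψ) hψc.smul_left
  have hint_fderiv : Integrable fun x => u x * fderiv ℝ χ x (ψ x) :=
    hu.mul_bdd ((hχ.continuous_fderiv one_ne_zero).clm_apply hψ.continuous).aestronglyMeasurable
      (Eventually.of_forall hfderiv_le)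
  have hdiv_le : ∫ x, u x * divergence (χ • ψ) x ≤ T := by
    refine hT ⟨χ • ψ, hχ.smul hψ, hψc.smul_left, fun x => ?_, rfl⟩
    rw [Pi.smul_apply', norm_smul]
    exact mul_le_one₀ (h1 x) (norm_nonneg _) (hψ1 x)
  have hfderiv_ge : -(M * ∫ x, ‖u x‖) ≤ ∫ x, u x * fderiv ℝ χ x (ψ x) := by
    refine neg_le_of_abs_le ?_
    rw [← Real.norm_eq_abs, ← integral_const_mul]
    refine (norm_integral_le_integral_norm _).trans ?_
    refine integral_mono hint_fderiv.norm (hu.norm.const_mul _) fun x => ?_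
    rw [norm_mul, mul_comm]
    exact mul_le_mul_of_nonneg_right (hfderiv_le x) (norm_nonneg _)
  calc ∫ x, χ x * u x * divergence ψ x
      = (∫ x, u x * divergence (χ • ψ) x) - ∫ x, u x * fderiv ℝ χ x (ψ x) := by
        rw [← integral_sub hint_div hint_fderiv]
        refine integral_congr_ae (Eventually.of_forall fun x => ?_)
        simp only [divergence_smul hχ hψ]
        ring
    _ ≤ T + M * ∫ x, ‖u x‖ := by linarith

theorem isoConst_mul_eLpNorm_le (hN : 2 ≤ N) (hu : Integrable u)
    (hT : T ∈ upperBounds (TVSet N u)) :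
    ENNReal.ofReal (isoConst N) * eLpNorm u (ENNReal.ofReal (criticalExp N)) volume ≤
      ENNReal.ofReal T := by
  let χ : ContDiffBump (0 : Euc N) := ⟨1, 2, one_pos, one_lt_two⟩
  have hχ : ContDiff ℝ 1 χ := χ.contDiff
  have hχ1 (x : Euc N) : ‖χ x‖ ≤ 1 := by
    rw [Real.norm_of_nonneg χ.nonneg]
    exact χ.le_one
  obtain ⟨M, hM⟩ := (hχ.continuous_fderiv one_ne_zero).bounded_above_of_compact_support
    (χ.hasCompactSupport.fderiv ℝ)
  let s (k : ℕ) : ℝ := 1 / (k + 1)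
  have hs (k : ℕ) : 0 < s k := by positivity
  have hs_lim : Tendsto s atTop (𝓝 0) := tendsto_one_div_add_atTop_nhds_zero_nat
  have hsmooth (k : ℕ) : ContDiff ℝ 1 fun x => χ (s k • x) := hχ.comp (contDiff_const_smul (s k))
  have hfderiv (k : ℕ) (x : Euc N) : ‖fderiv ℝ (fun x => χ (s k • x)) x‖ ≤ s k * M := by
    rw [fderiv_comp_smul, norm_smul, Real.norm_of_nonneg (hs k).le]
    exact mul_le_mul_of_nonneg_left (hM _) (hs k).le
  have hinteg (k : ℕ) : Integrable fun x => χ (s k • x) * u x :=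
    hu.bdd_mul (hsmooth k).continuous.aestronglyMeasurable (Eventually.of_forall fun x => hχ1 _)
  have hlim (x : Euc N) : Tendsto (fun k => χ (s k • x) * u x) atTop (𝓝 (u x)) := by
    have hx : Tendsto (fun k => s k • x) atTop (𝓝 0) := by simpa using hs_lim.smul_const x
    refine tendsto_const_nhds.congr' ?_
    filter_upwards [hx.eventually (Metric.closedBall_mem_nhds 0 one_pos)] with k hk
    rw [χ.one_of_mem_closedBall hk, one_mul]
  refine mul_eLpNorm_le_of_ae_tendsto (fun k => (hinteg k).aestronglyMeasurable)
    (Eventually.of_forall hlim)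
    (fun k => isoConst_mul_eLpNorm_le_of_hasCompactSupport hN (hinteg k)
      (χ.hasCompactSupport.comp_smul (hs k).ne').mul_right
      (add_mul_integral_norm_mem_upperBounds_TVSet_mul hu hT (hsmooth k) (fun x => hχ1 _)
        (hfderiv k))) ((ENNReal.continuous_ofReal.tendsto T).comp ?_)
  simpa using ((hs_lim.mul_const M).mul_const (∫ x, ‖u x‖)).const_add T

end Sobolev

section BallTotalVariation

variable {N : ℕ} {ψ : Euc N → Euc N} {ε : ℝ} {A : Set (Euc N)}

lemma lipschitzWith_coe_thickenedIndicator (hε : 0 < ε) (A : Set (Euc N)) :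
    LipschitzWith ε.toNNReal⁻¹ fun x => (thickenedIndicator hε A x : ℝ) := by
  simpa only [one_mul, Function.comp_def] using
    NNReal.isometry_coe.lipschitz.comp (lipschitzWith_thickenedIndicator hε A)

lemma fderiv_thickenedIndicator_eq_zero (hε : 0 < ε) {x : Euc N}
    (hx : x ∉ Metric.cthickening ε A \ interior A) :
    fderiv ℝ (fun y => (thickenedIndicator hε A y : ℝ)) x = 0 := by
  by_cases hxA : x ∈ interior A
  · have hone : (fun y => (thickenedIndicator hε A y : ℝ)) =ᶠ[𝓝 x] fun _ => 1 := by
      filter_upwards [mem_interior_iff_mem_nhds.1 hxA] with y hy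
      simp [thickenedIndicator_one hε A hy]
    rw [hone.fderiv_eq, fderiv_const_apply]
  · have hzero : (fun y => (thickenedIndicator hε A y : ℝ)) =ᶠ[𝓝 x] fun _ => 0 := by
      filter_upwards [Metric.isClosed_cthickening.isOpen_compl.mem_nhds fun h => hx ⟨h, hxA⟩]
        with y hy
      simp [thickenedIndicator_zero hε A
        fun h => hy (Metric.thickening_subset_cthickening _ _ h)]
    rw [hzero.fderiv_eq, fderiv_const_apply]

lemma integral_thickenedIndicator_mul_divergence_le (hε : 0 < ε) (hA : Bornology.IsBounded A)
    (hψ : ContDiff ℝ 1 ψ) (hψc : HasCompactSupport ψ) (hψ1 : ∀ x, ‖ψ x‖ ≤ 1) :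
    ∫ x, (thickenedIndicator hε A x : ℝ) * divergence ψ x ≤
      ε⁻¹ * volume.real (Metric.cthickening ε A \ interior A) := by
  have hlip := lipschitzWith_coe_thickenedIndicator hε A
  have hmeas : MeasurableSet (Metric.cthickening ε A \ interior A) :=
    Metric.isClosed_cthickening.measurableSet.diff isOpen_interior.measurableSet
  have hfin : volume (Metric.cthickening ε A \ interior A) ≠ ∞ :=
    ((measure_mono Set.sdiff_subset).trans_lt hA.cthickening.measure_lt_top).ne
  have hbound (x : Euc N) : -fderiv ℝ (fun y => (thickenedIndicator hε A y : ℝ)) x (ψ x) ≤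
      (Metric.cthickening ε A \ interior A).indicator (fun _ => ε⁻¹) x := by
    by_cases hx : x ∈ Metric.cthickening ε A \ interior A
    · rw [Set.indicator_of_mem hx]
      refine (neg_le_abs _).trans ?_
      rw [← Real.norm_eq_abs]
      refine (ContinuousLinearMap.le_opNorm_of_le _ (hψ1 x)).trans ?_
      simpa [hε.le] using norm_fderiv_le_of_lipschitz ℝ hlip (x₀ := x)
    · rw [fderiv_thickenedIndicator_eq_zero hε hx, Set.indicator_of_notMem hx]
      simp
  rw [integral_mul_divergence_eq_neg hlip hψ hψc, ← integral_neg]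
  refine (integral_mono (integrable_fderiv_apply hlip hψ hψc).neg
    ((integrable_indicator_iff hmeas).2 (integrableOn_const (hs := hfin))) hbound).trans_eq ?_
  rw [integral_indicator_const _ hmeas, smul_eq_mul, mul_comm]

lemma tendsto_integral_thickenedIndicator_mul (hA : IsClosed A) {g : Euc N → ℝ}
    (hg : Integrable g) {s : ℕ → ℝ} (hs : ∀ k, 0 < s k) (hs_lim : Tendsto s atTop (𝓝 0)) :
    Tendsto (fun k => ∫ x, (thickenedIndicator (hs k) A x : ℝ) * g x) atTop
      (𝓝 (∫ x in A, g x)) := by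
  rw [← integral_indicator hA.measurableSet]
  refine tendsto_integral_of_dominated_convergence (fun x => ‖g x‖) (fun k => ?_) hg.norm
    (fun k => Eventually.of_forall fun x => ?_) (Eventually.of_forall fun x => ?_)
  · exact (lipschitzWith_coe_thickenedIndicator (hs k) A).continuous.aestronglyMeasurable.mul
      hg.aestronglyMeasurable
  · rw [norm_mul, NNReal.norm_eq]
    exact mul_le_of_le_one_left (norm_nonneg _) (mod_cast thickenedIndicator_le_one (hs k) A x)
  · have hlim := tendsto_pi_nhds.1 (thickenedIndicator_tendsto_indicator_closure hs hs_lim A) x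
    rw [hA.closure_eq] at hlim
    have hind : ((A.indicator (fun _ => (1 : ℝ≥0)) x : ℝ≥0) : ℝ) * g x = A.indicator g x := by
      by_cases hx : x ∈ A <;> simp [hx]
    rw [← hind]
    exact ((NNReal.continuous_coe.tendsto _).comp hlim).mul_const _

lemma volume_closedBall_eq_ofReal (x : Euc N) {t : ℝ} (ht : 0 < t) :
    volume (Metric.closedBall x t) = ENNReal.ofReal (t ^ N * unitBallVolume N) := by
  rw [← volume_ball_eq_ofReal x ht, Measure.addHaar_closedBall _ _ ht.le,
    Measure.addHaar_ball_of_pos _ _ ht]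

lemma volume_real_closedBall_sdiff_ball {r : ℝ} (hr : 0 < r) (hε : 0 < ε) :
    volume.real (Metric.closedBall (0 : Euc N) (ε + r) \ Metric.ball 0 r) =
      (r + ε) ^ N * unitBallVolume N - r ^ N * unitBallVolume N := by
  have hκ := unitBallVolume_pos N
  rw [measureReal_sdiff (Metric.ball_subset_closedBall.trans
      (Metric.closedBall_subset_closedBall (by linarith))) measurableSet_ball
      measure_closedBall_lt_top.ne,
    measureReal_def, measureReal_def, volume_closedBall_eq_ofReal _ (by positivity),
    volume_ball_eq_ofReal _ hr, ENNReal.toReal_ofReal (by positivity),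
    ENNReal.toReal_ofReal (by positivity), add_comm ε]

lemma setIntegral_closedBall_divergence_le {r : ℝ} (hr : 0 < r) (hψ : ContDiff ℝ 1 ψ)
    (hψc : HasCompactSupport ψ) (hψ1 : ∀ x, ‖ψ x‖ ≤ 1) :
    ∫ x in Metric.closedBall 0 r, divergence ψ x ≤ N * r ^ (N - 1) * unitBallVolume N := by
  let s (k : ℕ) : ℝ := 1 / (k + 1)
  have hs (k : ℕ) : 0 < s k := by positivity
  have hs_lim : Tendsto s atTop (𝓝 0) := tendsto_one_div_add_atTop_nhds_zero_nat
  have hderiv : HasDerivAt (fun t => t ^ N * unitBallVolume N)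
      (N * r ^ (N - 1) * unitBallVolume N) r := (hasDerivAt_pow N r).mul_const _
  have hslope := hderiv.tendsto_slope_zero.comp
    (tendsto_nhdsWithin_iff.2 ⟨hs_lim, Eventually.of_forall fun k => (hs k).ne'⟩)
  have hinteg : Integrable (divergence ψ) :=
    (continuous_divergence hψ).integrable_of_hasCompactSupport (hasCompactSupport_divergence hψc)
  refine le_of_tendsto_of_tendsto' (tendsto_integral_thickenedIndicator_mul
    Metric.isClosed_closedBall hinteg hs hs_lim) hslope fun k => ?_
  refine (integral_thickenedIndicator_mul_divergence_le (hs k) Metric.isBounded_closedBall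
    hψ hψc hψ1).trans_eq ?_
  rw [cthickening_closedBall (hs k).le hr.le, interior_closedBall _ hr.ne',
    volume_real_closedBall_sdiff_ball hr (hs k)]
  simp

end BallTotalVariation

section GagliardoNirenberg

variable {N : ℕ} {u : Euc N → ℝ} {p q s t : ℝ}

lemma lintegral_rpow_le_mul_of_add_eq_one {X : Type*} [MeasurableSpace X] {μ : Measure X}
    {f : X → ℝ≥0∞} (hf : AEMeasurable f μ) (hp : 0 ≤ p) (hq : 0 ≤ q) (hs : 0 ≤ s) (ht : 0 ≤ t)
    (hst : s + t = 1) :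
    ∫⁻ x, f x ^ (p * s + q * t) ∂μ ≤ (∫⁻ x, f x ^ p ∂μ) ^ s * (∫⁻ x, f x ^ q ∂μ) ^ t := by
  refine le_of_eq_of_le (lintegral_congr fun x => ?_)
    (ENNReal.lintegral_mul_norm_pow_le (hf.pow_const p) (hf.pow_const q) hs ht hst)
  rw [← ENNReal.rpow_mul, ← ENNReal.rpow_mul,
    ENNReal.rpow_add_of_nonneg _ _ (mul_nonneg hp hs) (mul_nonneg hq ht)]

lemma nrm1_eq_toReal_lintegral (u : Euc N → ℝ) : nrm1 N u = (∫⁻ x, ‖u x‖ₑ).toReal := by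
  rw [nrm1, eLpNorm_one_eq_lintegral_enorm]

lemma nrmq_rpow_eq_toReal_lintegral (hq : 0 < q) (u : Euc N → ℝ) :
    nrmq N q u ^ q = (∫⁻ x, ‖u x‖ₑ ^ q).toReal := by
  rw [nrmq, eLpNorm_eq_lintegral_rpow_enorm_toReal (ENNReal.ofReal_pos.2 hq).ne'
    ENNReal.ofReal_ne_top, ENNReal.toReal_ofReal hq.le, ENNReal.toReal_rpow, ← ENNReal.rpow_mul,
    one_div_mul_cancel hq.ne', ENNReal.rpow_one]

lemma nrmq_rpow_le_nrm1_rpow_mul_nrmq_rpow (hu : Integrable u) (hp : 0 < p)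
    (hup : MemLp u (ENNReal.ofReal p) volume) (hs : 0 ≤ s) (ht : 0 ≤ t) (hst : s + t = 1) :
    nrmq N (s + p * t) u ^ (s + p * t) ≤ nrm1 N u ^ s * nrmq N p u ^ (p * t) := by
  have hpos : 0 < s + p * t := by
    rcases hs.eq_or_lt with rfl | hs
    · rw [zero_add] at hst
      simp [hst, hp]
    · positivity
  have hfin1 : ∫⁻ x, ‖u x‖ₑ ≠ ∞ := hu.2.ne
  have hfinp : ∫⁻ x, ‖u x‖ₑ ^ p ≠ ∞ := by
    simpa only [ENNReal.toReal_ofReal hp.le] using ((eLpNorm_lt_top_iff_lintegral_rpow_enorm_lt_top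
      (ENNReal.ofReal_pos.2 hp).ne' ENNReal.ofReal_ne_top).1 hup.2).ne
  have hle := lintegral_rpow_le_mul_of_add_eq_one hu.1.enorm zero_le_one hp.le hs ht hst
  simp only [one_mul, ENNReal.rpow_one] at hle
  rw [Real.rpow_mul (x := nrmq N p u) ENNReal.toReal_nonneg, nrmq_rpow_eq_toReal_lintegral hpos,
    nrmq_rpow_eq_toReal_lintegral hp, nrm1_eq_toReal_lintegral, ENNReal.toReal_rpow,
    ENNReal.toReal_rpow, ← ENNReal.toReal_mul]
  exact ENNReal.toReal_mono (ENNReal.mul_ne_top (ENNReal.rpow_ne_top_of_nonneg hs hfin1)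
    (ENNReal.rpow_ne_top_of_nonneg ht hfinp)) hle

lemma tv_nonneg (u : Euc N → ℝ) : 0 ≤ tv N u :=
  Real.sSup_nonneg' ⟨0, zero_mem_TVSet u, le_rfl⟩

lemma MemBV.tv_mem_upperBounds (hu : MemBV N u) : tv N u ∈ upperBounds (TVSet N u) :=
  fun _ hr => le_csSup hu.2 hr

lemma MemBV.memLp_criticalExp (hN : 2 ≤ N) (hu : MemBV N u) :
    MemLp u (ENNReal.ofReal (criticalExp N)) volume := by
  refine ⟨hu.1.1, ENNReal.lt_top_of_mul_ne_top_right (ne_top_of_le_ne_top ENNReal.ofReal_ne_top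
    (isoConst_mul_eLpNorm_le hN hu.1 hu.tv_mem_upperBounds)) ?_⟩
  exact (ENNReal.ofReal_pos.2 (isoConst_pos (by omega))).ne'

theorem isoConst_mul_nrmq_le_tv (hN : 2 ≤ N) (hu : MemBV N u) :
    isoConst N * nrmq N (criticalExp N) u ≤ tv N u := by
  have h := ENNReal.toReal_mono ENNReal.ofReal_ne_top
    (isoConst_mul_eLpNorm_le hN hu.1 hu.tv_mem_upperBounds)
  rwa [ENNReal.toReal_mul, ENNReal.toReal_ofReal (isoConst_pos (by omega)).le,
    ENNReal.toReal_ofReal (tv_nonneg u)] at h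

/-- The sharp constant `E_q` of the Gagliardo–Nirenberg inequality `nrmq_rpow_le_gnConst_mul`. -/
def gnConst (N : ℕ) (q : ℝ) : ℝ := (1 / ((N : ℝ) ^ (N - 1) * omegaS N)) ^ (q - 1)

lemma isoConst_pow (hN : N ≠ 0) : isoConst N ^ N = (N : ℝ) ^ (N - 1) * omegaS N := by
  rw [isoConst, mul_pow, one_div, Real.rpow_inv_natCast_pow (unitBallVolume_pos N).le hN,
    ← mul_pow_sub_one hN (N : ℝ), omegaS, ← unitBallVolume]
  ring

lemma gnConst_mul_rpow (hN : N ≠ 0) (q : ℝ) {V : ℝ} (hV : 0 ≤ V) :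
    gnConst N q * V ^ ((q - 1) * N) = (V / isoConst N) ^ ((q - 1) * N) := by
  have hc := isoConst_pos hN
  rw [gnConst, ← isoConst_pow hN, mul_comm (q - 1), Real.rpow_mul hV, Real.rpow_mul (by positivity),
    Real.rpow_natCast, Real.rpow_natCast, ← Real.mul_rpow (by positivity) (by positivity), div_pow,
    one_div_mul_eq_div]

lemma sub_mul_natCast_nonneg (hN : 2 ≤ N) (hq : q ≤ criticalExp N) : 0 ≤ q - (q - 1) * N := by
  have hN' : (2 : ℝ) ≤ N := by exact_mod_cast hN
  rw [criticalExp, le_div_iff₀ (by linarith)] at hq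
  linarith

theorem nrmq_rpow_le_gnConst_mul (hN : 2 ≤ N) (hq₁ : 1 ≤ q) (hq₂ : q ≤ criticalExp N)
    (hu : MemBV N u) :
    nrmq N q u ^ q ≤ gnConst N q * (nrm1 N u ^ (q - (q - 1) * N) * tv N u ^ ((q - 1) * N)) := by
  have hN' : (2 : ℝ) ≤ N := by exact_mod_cast hN
  have hc := isoConst_pos (N := N) (by omega)
  have hθ := sub_mul_natCast_nonneg hN hq₂
  have ht : 0 ≤ (q - 1) * (N - 1) := mul_nonneg (by linarith) (by linarith)
  have hexp : criticalExp N * ((q - 1) * (N - 1)) = (q - 1) * N := by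
    rw [criticalExp]
    field [show (N : ℝ) - 1 ≠ 0 by linarith]
  have hinterp := nrmq_rpow_le_nrm1_rpow_mul_nrmq_rpow hu.1
    (zero_lt_one.trans (one_lt_criticalExp hN)) (hu.memLp_criticalExp hN) hθ ht (by ring)
  rw [hexp, sub_add_cancel] at hinterp
  have hsob : nrmq N (criticalExp N) u ≤ tv N u / isoConst N :=
    (le_div_iff₀' hc).2 (isoConst_mul_nrmq_le_tv hN hu)
  calc nrmq N q u ^ q
      ≤ nrm1 N u ^ (q - (q - 1) * N) * nrmq N (criticalExp N) u ^ ((q - 1) * N) := hinterp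
    _ ≤ nrm1 N u ^ (q - (q - 1) * N) * (tv N u / isoConst N) ^ ((q - 1) * N) := by
      gcongr
      · exact Real.rpow_nonneg ENNReal.toReal_nonneg _
      · exact ENNReal.toReal_nonneg
    _ = _ := by
      rw [← gnConst_mul_rpow (by omega) q (tv_nonneg u)]
      ring

end GagliardoNirenberg

section BallFunctions

variable {N : ℕ} {q r c : ℝ}

/-- The function `c 𝟙_{B_r}`, with a closed ball: extremal in the Gagliardo–Nirenberg inequality. -/
def ballFun (N : ℕ) (r c : ℝ) : Euc N → ℝ := (Metric.closedBall 0 r).indicator fun _ => c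

lemma integrable_ballFun (N : ℕ) (r c : ℝ) : Integrable (ballFun N r c) :=
  (integrable_indicator_iff measurableSet_closedBall).2
    (integrableOn_const (hs := measure_closedBall_lt_top.ne))

lemma mem_upperBounds_TVSet_ballFun (hr : 0 < r) (hc : 0 ≤ c) :
    c * (N * r ^ (N - 1) * unitBallVolume N) ∈ upperBounds (TVSet N (ballFun N r c)) := by
  rintro _ ⟨ψ, hψ, hψc, hψ1, rfl⟩
  refine le_of_eq_of_le ?_
    (mul_le_mul_of_nonneg_left (setIntegral_closedBall_divergence_le hr hψ hψc hψ1) hc)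
  rw [← integral_const_mul, ← integral_indicator measurableSet_closedBall]
  exact integral_congr_ae (Eventually.of_forall fun x =>
    (Set.indicator_mul_left _ (fun _ => c) (divergence ψ)).symm)

lemma memBV_ballFun (hr : 0 < r) (hc : 0 ≤ c) : MemBV N (ballFun N r c) :=
  ⟨integrable_ballFun N r c, _, mem_upperBounds_TVSet_ballFun hr hc⟩

lemma nrmq_ballFun (hq : 0 < q) (hr : 0 < r) (hc : 0 ≤ c) :
    nrmq N q (ballFun N r c) = c * (r ^ N * unitBallVolume N) ^ (1 / q) := by
  have := unitBallVolume_pos N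
  rw [nrmq, ballFun, eLpNorm_indicator_const measurableSet_closedBall (ENNReal.ofReal_pos.2 hq).ne'
    ENNReal.ofReal_ne_top, ENNReal.toReal_mul, toReal_enorm, Real.norm_of_nonneg hc,
    volume_closedBall_eq_ofReal _ hr, ENNReal.toReal_ofReal hq.le, ← ENNReal.toReal_rpow,
    ENNReal.toReal_ofReal (by positivity)]

lemma nrm1_ballFun (hr : 0 < r) (hc : 0 ≤ c) :
    nrm1 N (ballFun N r c) = c * (r ^ N * unitBallVolume N) := by
  simpa [nrmq, nrm1] using nrmq_ballFun (N := N) one_pos hr hc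

lemma isoConst_mul_rpow (hN : 2 ≤ N) (hr : 0 ≤ r) :
    isoConst N * (r ^ N * unitBallVolume N) ^ (1 / criticalExp N) =
      N * r ^ (N - 1) * unitBallVolume N := by
  have hκ := unitBallVolume_pos N
  have hN₀ : (N : ℝ) ≠ 0 := by positivity
  have hexp : 1 / criticalExp N = 1 - 1 / N := by
    rw [criticalExp]
    field
  have hrpow : (r ^ N) ^ (1 - 1 / (N : ℝ)) = r ^ (N - 1) := by
    rw [← Real.rpow_natCast, ← Real.rpow_mul hr, ← Real.rpow_natCast r (N - 1),
      Nat.cast_sub (by omega)]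
    congr 1
    field
  rw [isoConst, hexp, Real.mul_rpow (by positivity) hκ.le, hrpow, Real.rpow_sub hκ, Real.rpow_one]
  field

lemma tv_ballFun (hN : 2 ≤ N) (hr : 0 < r) (hc : 0 ≤ c) :
    tv N (ballFun N r c) = c * (N * r ^ (N - 1) * unitBallVolume N) := by
  refine le_antisymm
    (csSup_le ⟨0, zero_mem_TVSet _⟩ (mem_upperBounds_TVSet_ballFun hr hc)) ?_
  have hsob := isoConst_mul_nrmq_le_tv hN (memBV_ballFun hr hc)
  rwa [nrmq_ballFun (zero_lt_one.trans (one_lt_criticalExp hN)) hr hc, mul_left_comm,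
    isoConst_mul_rpow hN hr.le] at hsob

lemma nrmq_ballFun_rpow_eq (hN : 2 ≤ N) (hq : 0 < q) (hr : 0 < r) (hc : 0 < c) :
    nrmq N q (ballFun N r c) ^ q = gnConst N q *
      (nrm1 N (ballFun N r c) ^ (q - (q - 1) * N) * tv N (ballFun N r c) ^ ((q - 1) * N)) := by
  have hκ := unitBallVolume_pos N
  have hiso := isoConst_pos (N := N) (by omega)
  have hv : 0 < r ^ N * unitBallVolume N := by positivity
  have hcrit : 1 / criticalExp N * ((q - 1) * N) = (q - 1) * (N - 1) := by
    rw [criticalExp]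
    field
  rw [mul_left_comm, gnConst_mul_rpow (by omega) q (tv_nonneg _), tv_ballFun hN hr hc.le,
    ← isoConst_mul_rpow hN hr.le, mul_left_comm, mul_div_cancel_left₀ _ hiso.ne',
    nrm1_ballFun hr hc.le, nrmq_ballFun hq hr hc.le, Real.mul_rpow hc.le (by positivity),
    Real.mul_rpow hc.le hv.le, Real.mul_rpow hc.le (by positivity), ← Real.rpow_mul hv.le,
    ← Real.rpow_mul hv.le, hcrit, mul_mul_mul_comm, ← Real.rpow_add hc, ← Real.rpow_add hv,
    one_div_mul_cancel hq.ne']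
  ring_nf

lemma exists_nrmq_rpow_eq_gnConst_mul (hN : 2 ≤ N) (hq : 0 < q) {m V : ℝ} (hm : 0 < m)
    (hV : 0 < V) :
    ∃ u, MemBV N u ∧ nrm1 N u = m ∧ tv N u = V ∧
      nrmq N q u ^ q = gnConst N q * (m ^ (q - (q - 1) * N) * V ^ ((q - 1) * N)) := by
  have hκ := unitBallVolume_pos N
  have hN₀ : N ≠ 0 := by omega
  obtain ⟨r, hr, hrV⟩ : ∃ r : ℝ, 0 < r ∧ V * r = N * m :=
    ⟨N * m / V, by positivity, mul_div_cancel₀ _ hV.ne'⟩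
  obtain ⟨c, hc, hcm⟩ : ∃ c : ℝ, 0 < c ∧ c * (r ^ N * unitBallVolume N) = m :=
    ⟨m / (r ^ N * unitBallVolume N), by positivity, div_mul_cancel₀ _ (by positivity)⟩
  have hnrm1 : nrm1 N (ballFun N r c) = m := (nrm1_ballFun hr hc.le).trans hcm
  have htv : tv N (ballFun N r c) = V := by
    refine mul_right_cancel₀ hr.ne' ?_
    rw [tv_ballFun hN hr hc.le, hrV, ← hcm, ← pow_sub_one_mul hN₀ r]
    ring
  refine ⟨ballFun N r c, memBV_ballFun hr hc.le, hnrm1, htv, ?_⟩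
  rw [nrmq_ballFun_rpow_eq hN hq hr hc, hnrm1, htv]

end BallFunctions

section Substitution

variable {N : ℕ} {u : Euc N → ℝ} {a b : ℝ}

lemma nrm1_pos (hu : Integrable u) (hne : ¬ u =ᵐ[volume] 0) : 0 < nrm1 N u :=
  ENNReal.toReal_pos (mt (eLpNorm_eq_zero_iff hu.1 one_ne_zero).1 hne)
    (memLp_one_iff_integrable.2 hu).2.ne

lemma tv_pos (hN : 2 ≤ N) (hu : MemBV N u) (hne : ¬ u =ᵐ[volume] 0) : 0 < tv N u := by
  have hcrit : ENNReal.ofReal (criticalExp N) ≠ 0 :=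
    (ENNReal.ofReal_pos.2 (zero_lt_one.trans (one_lt_criticalExp hN))).ne'
  have hnrmq : 0 < nrmq N (criticalExp N) u :=
    ENNReal.toReal_pos (mt (eLpNorm_eq_zero_iff hu.1.1 hcrit).1 hne)
      (hu.memLp_criticalExp hN).2.ne
  exact (mul_pos (isoConst_pos (by omega)) hnrmq).trans_le (isoConst_mul_nrmq_le_tv hN hu)

lemma tv_eq_zero_of_ae_eq_zero (h : u =ᵐ[volume] 0) : tv N u = 0 := by
  refine le_antisymm (csSup_le ⟨0, zero_mem_TVSet u⟩ ?_) (tv_nonneg u)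
  rintro _ ⟨ψ, -, -, -, rfl⟩
  refine (integral_eq_zero_of_ae ?_).le
  filter_upwards [h] with x hx
  simp [hx]

lemma not_ae_eq_zero_of_tv_rpow_add_nrm1_rpow_eq_one (ha : a ≠ 0) (hb : b ≠ 0)
    (h : tv N u ^ a + nrm1 N u ^ b = 1) : ¬ u =ᵐ[volume] 0 := by
  intro hu
  have hnrm1 : nrm1 N u = 0 := by rw [nrm1, eLpNorm_congr_ae hu, eLpNorm_zero, ENNReal.toReal_zero]
  simp [hnrm1, tv_eq_zero_of_ae_eq_zero hu, Real.zero_rpow, ha, hb] at h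

/-- The function `f_α(t)` of the theorem. -/
def fAlpha (N : ℕ) (q α a b t : ℝ) : ℝ :=
  ((1 + t) ^ ((q - 1) * (N / a - (N - 1) / b)) + α * gnConst N q * t ^ ((q - 1) * N / a)) /
    (1 + t) ^ ((q - 1) * N / a + (N - q * (N - 1)) / b)

lemma fAlpha_rpow_div_rpow (N : ℕ) (q α : ℝ) (ha : a ≠ 0) (hb : b ≠ 0) {m V : ℝ} (hm : 0 < m)
    (hV : 0 < V) (h : V ^ a + m ^ b = 1) :
    fAlpha N q α a b (V ^ a / m ^ b) =
      m + α * (gnConst N q * (m ^ (q - (q - 1) * N) * V ^ ((q - 1) * N))) := by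
  have hadd : 1 + V ^ a / m ^ b = m ^ (-b) := by
    rw [Real.rpow_neg hm.le, one_add_div (by positivity), add_comm, h, one_div]
  have hdiv : V ^ a / m ^ b = V ^ a * m ^ (-b) := by rw [Real.rpow_neg hm.le, div_eq_mul_inv]
  have hmass : -b * ((q - 1) * (N / a - (N - 1) / b)) -
      -b * ((q - 1) * N / a + (N - q * (N - 1)) / b) = 1 := by
    field
  have hpow : -b * ((q - 1) * N / a) - -b * ((q - 1) * N / a + (N - q * (N - 1)) / b) =
      q - (q - 1) * N := by
    field
  have hVexp : a * ((q - 1) * N / a) = (q - 1) * N := by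
    field
  rw [fAlpha, hadd, hdiv, add_div, Real.mul_rpow (by positivity) (by positivity),
    ← Real.rpow_mul hm.le, ← Real.rpow_mul hm.le, ← Real.rpow_mul hm.le, ← Real.rpow_mul hV.le,
    ← Real.rpow_sub hm, hmass, Real.rpow_one, hVexp, ← mul_assoc, mul_div_assoc,
    ← Real.rpow_sub hm, hpow]
  ring

lemma exists_rpow_add_rpow_eq_one_and_div_eq (ha : a ≠ 0) (hb : b ≠ 0) {t : ℝ} (ht : 0 < t) :
    ∃ m V : ℝ, 0 < m ∧ 0 < V ∧ V ^ a + m ^ b = 1 ∧ V ^ a / m ^ b = t := by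
  refine ⟨(1 / (1 + t)) ^ b⁻¹, (t / (1 + t)) ^ a⁻¹, by positivity, by positivity, ?_⟩
  rw [Real.rpow_inv_rpow (by positivity) ha, Real.rpow_inv_rpow (by positivity) hb]
  constructor <;> field

end Substitution

end

/-- `D_α = sup_{t>0} f_α(t)`. -/
theorem Dalpha_eq_sup_falpha (N : ℕ) (hN : 2 ≤ N) (q : ℝ) (hq1 : 1 < q)
    (hq2 : q ≤ (N : ℝ) / ((N : ℝ) - 1)) (α a b : ℝ) (hα : 0 < α) (ha : 0 < a)
    (hb : 0 < b) :
    sSup { r | ∃ u : Euc N → ℝ, MemBV N u ∧ tv N u ^ a + nrm1 N u ^ b = 1 ∧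
        r = nrm1 N u + α * nrmq N q u ^ q } =
    sSup { r | ∃ t : ℝ, 0 < t ∧
        r = ((1+t) ^ ((q-1)*((N:ℝ)/a - ((N:ℝ)-1)/b)) +
              α * (1 / ((N : ℝ) ^ (N - 1) * omegaS N)) ^ (q - 1) * t ^ ((q-1)*(N:ℝ)/a)) /
            (1+t) ^ ((q-1)*(N:ℝ)/a + ((N:ℝ) - q*((N:ℝ)-1))/b) } := by
  refine csSup_eq_csSup_of_forall_exists_le ?_ ?_
  · rintro _ ⟨u, hu, hcon, rfl⟩
    have hne := not_ae_eq_zero_of_tv_rpow_add_nrm1_rpow_eq_one ha.ne' hb.ne' hcon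
    have hm := nrm1_pos hu.1 hne
    have hV := tv_pos hN hu hne
    refine ⟨fAlpha N q α a b (tv N u ^ a / nrm1 N u ^ b), ⟨_, by positivity, rfl⟩, ?_⟩
    rw [fAlpha_rpow_div_rpow N q α ha.ne' hb.ne' hm hV hcon]
    gcongr
    exact nrmq_rpow_le_gnConst_mul hN hq1.le hq2 hu
  · rintro _ ⟨t, ht, rfl⟩
    obtain ⟨m, V, hm, hV, hcon, hdiv⟩ := exists_rpow_add_rpow_eq_one_and_div_eq ha.ne' hb.ne' ht
    obtain ⟨u, hu, rfl, rfl, hnrmq⟩ :=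
      exists_nrmq_rpow_eq_gnConst_mul hN (zero_lt_one.trans hq1) hm hV
    refine ⟨_, ⟨u, hu, hcon, rfl⟩, ?_⟩
    rw [hnrmq, ← fAlpha_rpow_div_rpow N q α ha.ne' hb.ne' hm hV hcon, hdiv]
    exact le_rfl
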